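/- Let H be a real-analytic hypersurface in an open set U ⊆ ℂⁿ (n ≥ 2) that is curve-supported from two sides at a point p ∈ H, and let V be a connected component of U ∖ H containing one of the support curves minus p. Then there exists an open neighborhood Ω of p in ℂⁿ such that: for every holomorphic function f : V → ℂ, if there exist δ > 0 and a holomorphic function g on B_δ(p) with g = f on B_δ(p) ∩ V, then there exists a holomorphic function F : Ω → ℂ with F = f on Ω ∩ V. -/

import Mathlib

open Metric

noncomputable section

/-- `H` is a (singular) real-analytic hypersurface in the open set `U ⊆ ℂⁿ`:
`H = {z ∈ U : ρ z = 0}` for some real-analytic `ρ : U → ℝ` (analytic over `ℝ`),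
`H` nonempty, and `ρ` does not vanish identically on any connected component of `U`. -/
def IsRealAnalyticHypersurface {n : ℕ} (U H : Set (EuclideanSpace ℂ (Fin n))) : Prop :=
  IsOpen U ∧ H.Nonempty ∧
    ∃ ρ : EuclideanSpace ℂ (Fin n) → ℝ,
      AnalyticOnNhd ℝ ρ U ∧
      H = {z | z ∈ U ∧ ρ z = 0} ∧
      ∀ z ∈ U, ∃ w ∈ connectedComponentIn U z, ρ w ≠ 0

/-- `C = φ '' 𝔻` is a support curve for `H` at `p`, parametrized by the nonconstant
holomorphic map `φ : 𝔻 → U` with `φ 0 = p` and `C ∩ H = {p}`. -/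
def IsSupportCurveVia {n : ℕ} (U H : Set (EuclideanSpace ℂ (Fin n)))
    (p : EuclideanSpace ℂ (Fin n)) (φ : ℂ → EuclideanSpace ℂ (Fin n))
    (C : Set (EuclideanSpace ℂ (Fin n))) : Prop :=
  DifferentiableOn ℂ φ (ball 0 1) ∧
  Set.MapsTo φ (ball 0 1) U ∧
  (∃ a ∈ ball (0 : ℂ) 1, ∃ b ∈ ball (0 : ℂ) 1, φ a ≠ φ b) ∧
  φ 0 = p ∧
  C = φ '' ball 0 1 ∧
  C ∩ H = {p}

/-- `C` is a support curve for `H` at `p`. -/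
def IsSupportCurve {n : ℕ} (U H : Set (EuclideanSpace ℂ (Fin n)))
    (p : EuclideanSpace ℂ (Fin n)) (C : Set (EuclideanSpace ℂ (Fin n))) : Prop :=
  ∃ φ : ℂ → EuclideanSpace ℂ (Fin n), IsSupportCurveVia U H p φ C

/-- `V` is a connected component of `U \ H`. -/
def IsComponentOfComplement {n : ℕ} (U H V : Set (EuclideanSpace ℂ (Fin n))) : Prop :=
  ∃ x ∈ U \ H, V = connectedComponentIn (U \ H) x

/-- `H` is curve-supported from two sides at `p`: there are two support curves at `p`
lying (off `p`) in two distinct connected components of `U \ H`. -/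
def CurveSupportedFromTwoSides {n : ℕ} (U H : Set (EuclideanSpace ℂ (Fin n)))
    (p : EuclideanSpace ℂ (Fin n)) : Prop :=
  ∃ C₁ C₂ V₁ V₂ : Set (EuclideanSpace ℂ (Fin n)),
    IsSupportCurve U H p C₁ ∧ IsSupportCurve U H p C₂ ∧
    IsComponentOfComplement U H V₁ ∧ IsComponentOfComplement U H V₂ ∧
    V₁ ≠ V₂ ∧ C₁ \ {p} ⊆ V₁ ∧ C₂ \ {p} ⊆ V₂

/-- `ψ` is an analytic disc attached to `S`: a nonconstant continuous map on the closed
unit disc, holomorphic on the open unit disc, with boundary values in `S`. -/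
def IsAttachedDisc {n : ℕ} (S : Set (EuclideanSpace ℂ (Fin n)))
    (ψ : ℂ → EuclideanSpace ℂ (Fin n)) : Prop :=
  ContinuousOn ψ (closedBall 0 1) ∧
  DifferentiableOn ℂ ψ (ball 0 1) ∧
  (∃ a ∈ closedBall (0 : ℂ) 1, ∃ b ∈ closedBall (0 : ℂ) 1, ψ a ≠ ψ b) ∧
  ψ '' sphere 0 1 ⊆ S

/-- The polynomial hull of `K ⊆ ℂⁿ`. -/
def polyHull {n : ℕ} (K : Set (EuclideanSpace ℂ (Fin n))) : Set (EuclideanSpace ℂ (Fin n)) :=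
  {z | ∀ P : MvPolynomial (Fin n) ℂ,
    ‖MvPolynomial.eval (fun i => z i) P‖ ≤
      ⨆ w : K, ‖MvPolynomial.eval (fun i => (w : EuclideanSpace ℂ (Fin n)) i) P‖}

/-- The rational hull of `K ⊆ ℂⁿ`. -/
def ratHull {n : ℕ} (K : Set (EuclideanSpace ℂ (Fin n))) : Set (EuclideanSpace ℂ (Fin n)) :=
  {z | ∀ P : MvPolynomial (Fin n) ℂ,
    MvPolynomial.eval (fun i => z i) P ∈
      (fun w : EuclideanSpace ℂ (Fin n) => MvPolynomial.eval (fun i => w i) P) '' K}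

/-!
Let `V` be the given component and `φ` a parametrization of the support curve that runs in `V` off
`p`. The average of `f` over the boundary of the translated disc `φ(ξ) + z - p` is holomorphic in
`z` on a ball around `p` whose radius does not depend on `f`. It coincides with `f` on `V` near `p`:
once `f` is glued with its local extension `g`, the translated closed discs with `z` close to `p`
lie in the domain of holomorphy, and the mean value property applies. The identity theorem carries
the coincidence to every component of `ball ∩ {ρ ≠ 0}` that adheres to `p`, so what remains is that
all components meeting a small neighbourhood of `p` do.

This last fact holds for the complement of the zero set of any real-analytic function and is proved
by induction on the dimension. After a linear change of coordinates the function does not vanish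
identically on a line through `p`. The argument principle expresses the power sums of the zeros of
the complexified function on nearby parallel lines as holomorphic functions of the line; a Hankel
determinant `Δ` of these power sums is a discriminant, so the zeros on the lines with `Δ ≠ 0` are
locally uniformly separated. A component of the complement can then be slid along any component of
`{Δ ≠ 0}`, and these adhere to `p` by the induction hypothesis.
-/

open Set Filter Topology Function
open scoped Real Interval

section ParametricIntegrals

variable {E F : Type*} [NormedAddCommGroup E] [NormedSpace ℂ E]
  [NormedAddCommGroup F] [NormedSpace ℂ F]

lemma norm_fderiv_le_two_mul_div {f : E → F} {c : E} {R M : ℝ} (hR : 0 < R)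
    (hf : DifferentiableOn ℂ f (ball c R)) (hM : ∀ z ∈ ball c R, ‖f z‖ ≤ M) :
    ‖fderiv ℂ f c‖ ≤ 2 * M / R := by
  refine Complex.norm_fderiv_le_div_of_mapsTo_ball hf (fun z hz => ?_) hR
  rw [mem_closedBall, dist_eq_norm]
  linarith [norm_sub_le (f z) (f c), hM z hz, hM c (mem_ball_self hR)]

variable [FiniteDimensional ℂ E]

lemma continuousOn_fderiv_of_continuousOn_uncurry {X : Type*} [TopologicalSpace X]
    {Φ : X → E → F} {k : Set X} {s : Set E} {z₀ : E} (hs : s ∈ 𝓝 z₀)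
    (hc : ContinuousOn (uncurry Φ) (k ×ˢ s)) (hd : ∀ x ∈ k, DifferentiableOn ℂ (Φ x) s) :
    ContinuousOn (fun x => fderiv ℂ (Φ x) z₀) k := by
  have : ProperSpace E := FiniteDimensional.proper ℂ E
  obtain ⟨R, hR, hRs⟩ := nhds_basis_closedBall.mem_iff.1 hs
  have hsub : ball z₀ R ⊆ s := ball_subset_closedBall.trans hRs
  have hdiff : ∀ x ∈ k, DifferentiableAt ℂ (Φ x) z₀ := fun x hx =>
    (hd x hx).differentiableAt hs
  intro x₀ hx₀
  refine Metric.tendsto_nhds.2 fun ε hε => ?_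
  obtain ⟨v, hv, hclose⟩ := (isCompact_closedBall z₀ R).mem_uniformity_of_prod
    (hc.mono (prod_mono_right hRs)) hx₀ (Metric.dist_mem_uniformity (by positivity : 0 < ε * R / 4))
  filter_upwards [hv, self_mem_nhdsWithin] with x hxv hxk
  rw [dist_eq_norm, ← fderiv_sub (hdiff x hxk) (hdiff x₀ hx₀)]
  calc ‖fderiv ℂ (Φ x - Φ x₀) z₀‖ ≤ 2 * (ε * R / 4) / R :=
        norm_fderiv_le_two_mul_div hR (((hd x hxk).sub (hd x₀ hx₀)).mono hsub) fun z hz => by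
          simpa [dist_eq_norm] using
            (show dist _ _ < _ from hclose x hxv z (ball_subset_closedBall hz)).le
    _ = ε / 2 := by field_simp; norm_num
    _ < ε := half_lt_self hε

lemma exists_norm_fderiv_le_of_isCompact {X : Type*} [TopologicalSpace X]
    {Φ : X → E → F} {k : Set X} (hk : IsCompact k) {s : Set E} {z₀ : E} (hs : s ∈ 𝓝 z₀)
    (hc : ContinuousOn (uncurry Φ) (k ×ˢ s)) (hd : ∀ x ∈ k, DifferentiableOn ℂ (Φ x) s) :
    ∃ C, ∃ R > 0, ball z₀ R ⊆ s ∧ ∀ x ∈ k, ∀ z ∈ ball z₀ R, ‖fderiv ℂ (Φ x) z‖ ≤ C := by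
  have : ProperSpace E := FiniteDimensional.proper ℂ E
  obtain ⟨R, hR, hRs⟩ := nhds_basis_closedBall.mem_iff.1 hs
  obtain ⟨M, hM⟩ := (hk.prod (isCompact_closedBall z₀ R)).exists_bound_of_continuousOn
    (hc.mono (prod_mono_right hRs))
  refine ⟨2 * M / (R / 2), R / 2, half_pos hR,
    (ball_subset_closedBall.trans (closedBall_subset_closedBall (half_le_self hR.le))).trans hRs,
    fun x hx z hz => ?_⟩
  have hsub : ball z (R / 2) ⊆ closedBall z₀ R :=
    (ball_subset_ball' (by linarith [mem_ball.1 hz])).trans ball_subset_closedBall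
  exact norm_fderiv_le_two_mul_div (half_pos hR) ((hd x hx).mono (hsub.trans hRs))
    fun w hw => hM (x, w) ⟨hx, hsub hw⟩

lemma differentiableOn_intervalIntegral_of_continuousOn_uncurry {Φ : ℝ → E → F} {a b : ℝ}
    {s : Set E} (hs : IsOpen s) (hc : ContinuousOn (uncurry Φ) (uIcc a b ×ˢ s))
    (hd : ∀ t ∈ uIcc a b, DifferentiableOn ℂ (Φ t) s) :
    DifferentiableOn ℂ (fun z => ∫ t in a..b, Φ t z) s := by
  intro z₀ hz₀
  obtain ⟨C, R, hR, hRs, hC⟩ :=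
    exists_norm_fderiv_le_of_isCompact isCompact_uIcc (hs.mem_nhds hz₀) hc hd
  have hint : ∀ z ∈ s, ContinuousOn (fun t => Φ t z) (uIcc a b) := fun z hz =>
    hc.comp (f := fun t => (t, z)) (by fun_prop) fun t ht => ⟨ht, hz⟩
  have hfderiv : ContinuousOn (fun t => fderiv ℂ (Φ t) z₀) (uIcc a b) :=
    continuousOn_fderiv_of_continuousOn_uncurry (hs.mem_nhds hz₀) hc hd
  refine DifferentiableAt.differentiableWithinAt (HasFDerivAt.differentiableAt
    (intervalIntegral.hasFDerivAt_integral_of_dominated_of_fderiv_le (bound := fun _ => C)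
      (F' := fun z t => fderiv ℂ (Φ t) z) (ball_mem_nhds z₀ hR) ?_
      (hint z₀ hz₀).intervalIntegrable ?_ ?_ intervalIntegrable_const ?_))
  · filter_upwards [hs.mem_nhds hz₀] with z hz
    exact (hint z hz).intervalIntegrable.aestronglyMeasurable_restrict_uIoc
  · exact hfderiv.intervalIntegrable.aestronglyMeasurable_restrict_uIoc
  · exact .of_forall fun t ht z hz => hC t (uIoc_subset_uIcc ht) z hz
  · exact .of_forall fun t ht z hz =>
      ((hd t (uIoc_subset_uIcc ht)).differentiableAt (hs.mem_nhds (hRs hz))).hasFDerivAt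

theorem differentiableOn_circleIntegral_of_continuousOn_uncurry {Φ : ℂ → E → F} {c : ℂ} {R : ℝ}
    (hR : 0 ≤ R) {s : Set E} (hs : IsOpen s) (hc : ContinuousOn (uncurry Φ) (sphere c R ×ˢ s))
    (hd : ∀ ξ ∈ sphere c R, DifferentiableOn ℂ (Φ ξ) s) :
    DifferentiableOn ℂ (fun z => ∮ ξ in C(c, R), Φ ξ z) s := by
  have hcircle : ContinuousOn (fun q : ℝ × E => (circleMap c R q.1, q.2)) (univ ×ˢ s) := by fun_prop
  refine differentiableOn_intervalIntegral_of_continuousOn_uncurry hs ?_ fun θ _ =>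
    (hd _ (circleMap_mem_sphere c hR θ)).const_smul _
  simp only [deriv_circleMap]
  exact ContinuousOn.smul (f := fun q : ℝ × E => circleMap 0 R q.1 * Complex.I) (by fun_prop)
    ((hc.comp hcircle fun q hq => ⟨circleMap_mem_sphere c hR _, hq.2⟩).mono
      (prod_mono_left (subset_univ _)))

end ParametricIntegrals

section HolomorphicFunctions

variable {E F : Type*} [NormedAddCommGroup E] [NormedSpace ℂ E]
  [NormedAddCommGroup F] [NormedSpace ℂ F] [CompleteSpace F]

lemma differentiableOn_lineDeriv [FiniteDimensional ℂ E] {G : E → F} {s : Set E} (hs : IsOpen s)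
    (hG : DifferentiableOn ℂ G s) (v : E) :
    DifferentiableOn ℂ (fun z => lineDeriv ℂ G z v) s := by
  intro z₀ hz₀
  have hnhds : (fun q : E × ℂ => q.1 + q.2 • v) ⁻¹' s ∈ 𝓝 (z₀, 0) :=
    ContinuousAt.preimage_mem_nhds (by fun_prop) (hs.mem_nhds (by simpa using hz₀))
  obtain ⟨⟨ε, r⟩, ⟨hε, hr⟩, hsub⟩ :=
    (nhds_basis_ball.prod_nhds nhds_basis_closedBall).mem_iff.1 hnhds
  have hmem : ∀ z ∈ ball z₀ ε, ∀ ξ ∈ closedBall (0 : ℂ) r, z + ξ • v ∈ s := fun z hz ξ hξ =>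
    hsub (mk_mem_prod hz hξ)
  have hcauchy : ∀ z ∈ ball z₀ ε, lineDeriv ℂ G z v =
      (2 * π * Complex.I : ℂ)⁻¹ • ∮ ξ in C(0, r), (1 / (ξ - 0) ^ 2) • G (z + ξ • v) := by
    intro z hz
    have hline : DifferentiableOn ℂ (fun ξ : ℂ => G (z + ξ • v)) (closedBall 0 r) :=
      hG.comp (by fun_prop) (hmem z hz)
    rw [hline.deriv_eq_smul_circleIntegral hr, inv_smul_smul₀ Complex.two_pi_I_ne_zero, lineDeriv]
  have hsphere : ∀ ξ ∈ sphere (0 : ℂ) r, (ξ - 0) ^ 2 ≠ 0 := fun ξ hξ =>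
    pow_ne_zero 2 (sub_ne_zero.2 (ne_of_mem_sphere hξ hr.ne'))
  have hdiff : DifferentiableOn ℂ
      (fun z => ∮ ξ in C(0, r), (1 / (ξ - 0) ^ 2) • G (z + ξ • v)) (ball z₀ ε) := by
    refine differentiableOn_circleIntegral_of_continuousOn_uncurry hr.le isOpen_ball ?_ fun ξ hξ =>
      (hG.comp (by fun_prop) fun z hz => hmem z hz ξ (sphere_subset_closedBall hξ)).const_smul _
    refine ContinuousOn.smul (f := fun q : ℂ × E => 1 / (q.1 - 0) ^ 2)
      (continuousOn_const.div (by fun_prop) fun q hq => hsphere q.1 hq.1)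
      (hG.continuousOn.comp (by fun_prop)
        fun q hq => hmem q.2 hq.2 q.1 (sphere_subset_closedBall hq.1))
  exact (((hdiff.const_smul _).congr hcauchy).differentiableAt
    (ball_mem_nhds z₀ hε)).differentiableWithinAt

lemma eqOn_of_convex_of_eventuallyEq {f g : E → F} {s : Set E} (hs : IsOpen s)
    (hs' : Convex ℝ s) (hf : DifferentiableOn ℂ f s) (hg : DifferentiableOn ℂ g s)
    {a : E} (ha : a ∈ s) (h : f =ᶠ[𝓝 a] g) : EqOn f g s := by
  intro b hb
  let line : ℂ → E := fun ξ => a + ξ • (b - a)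
  have hline : Differentiable ℂ line := by fun_prop
  have hopen : IsOpen (line ⁻¹' s) := hs.preimage hline.continuous
  have hconvex : Convex ℝ (line ⁻¹' s) :=
    (hs'.translate_preimage_right a).linear_preimage
      ((LinearMap.toSpanSingleton ℂ E (b - a)).restrictScalars ℝ)
  have hanalytic : ∀ {u : E → F}, DifferentiableOn ℂ u s →
      AnalyticOnNhd ℂ (u ∘ line) (line ⁻¹' s) := fun hu =>
    (hu.comp hline.differentiableOn fun _ hz => hz).analyticOnNhd hopen
  have hnear : f ∘ line =ᶠ[𝓝 0] g ∘ line :=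
    (hline.continuous.tendsto' 0 a (by simp [line])).eventually h
  simpa [line] using (hanalytic hf).eqOn_of_preconnected_of_eventuallyEq (hanalytic hg)
    hconvex.isPreconnected (by simpa [line] using ha) hnear
    (show (1 : ℂ) ∈ line ⁻¹' s by simpa [line] using hb)

theorem eqOn_of_isPreconnected_of_eventuallyEq {f g : E → F} {s : Set E} (hs : IsOpen s)
    (hs' : IsPreconnected s) (hf : DifferentiableOn ℂ f s) (hg : DifferentiableOn ℂ g s)
    {z₀ : E} (hz₀ : z₀ ∈ s) (h : f =ᶠ[𝓝 z₀] g) : EqOn f g s := by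
  suffices hsub : s ⊆ {z | f =ᶠ[𝓝 z] g} from fun z hz => (hsub hz).self_of_nhds
  refine hs'.subset_of_closure_inter_subset isOpen_setOfPred_eventually_nhds ⟨z₀, hz₀, h⟩ ?_
  rintro z ⟨hz, hzs⟩
  obtain ⟨R, hR, hRs⟩ := Metric.isOpen_iff.1 hs z hzs
  obtain ⟨a, ha, haR⟩ := mem_closure_iff_nhds.1 hz _ (ball_mem_nhds z hR)
  exact (eqOn_of_convex_of_eventuallyEq isOpen_ball (convex_ball z R) (hf.mono hRs)
    (hg.mono hRs) ha haR).eventuallyEq_of_mem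
    (ball_mem_nhds z hR)

end HolomorphicFunctions

section ArgumentPrinciple

lemma exists_finset_prod_pow_mul_of_analyticOnNhd {h : ℂ → ℂ} {U : Set ℂ} (hU : IsCompact U)
    (hU' : Preperfect U) (hh : AnalyticOnNhd ℂ h U) (hne : ∀ z ∈ U, ∃ᶠ w in 𝓝 z, h w ≠ 0) :
    ∃ (Z : Finset ℂ) (m : ℂ → ℕ) (u : ℂ → ℂ), (∀ a ∈ Z, a ∈ U ∧ 0 < m a) ∧
      AnalyticOnNhd ℂ u U ∧ (∀ w ∈ U, u w ≠ 0) ∧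
      ∀ w ∈ U, h =ᶠ[𝓝 w] fun z => (∏ a ∈ Z, (z - a) ^ m a) * u z := by
  let D := MeromorphicOn.divisor h U
  have hfin : D.support.Finite := D.finiteSupport hU
  have hD : ∀ a, 0 ≤ D a := MeromorphicOn.AnalyticOnNhd.divisor_nonneg hh
  obtain ⟨u, hu, hu0, hfactor⟩ := hh.meromorphicOn.extract_zeros_poles (fun z => by
    rw [(hh z z.2).meromorphicOrderAt_eq, ne_eq, ENat.map_eq_top_iff, analyticOrderAt_eq_top]
    simpa only [Filter.not_eventually] using hne z z.2) hfin
  have hprod : (∏ᶠ a, (· - a) ^ D a) = fun z : ℂ => ∏ a ∈ hfin.toFinset, (z - a) ^ (D a).toNat := by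
    ext z
    rw [finprod_eq_prod_of_mulSupport_subset (s := hfin.toFinset) _ (by
      rw [FactorizedRational.mulSupport]; simp), Finset.prod_apply]
    refine Finset.prod_congr rfl fun a _ => ?_
    rw [Pi.pow_apply, ← zpow_natCast, Int.toNat_of_nonneg (hD a)]
  have hpoly : AnalyticOnNhd ℂ (fun z => (∏ a ∈ hfin.toFinset, (z - a) ^ (D a).toNat) * u z) U :=
    fun w hw => (Finset.analyticAt_fun_prod _ fun a _ => by fun_prop).mul (hu w hw)
  refine ⟨hfin.toFinset, fun a => (D a).toNat, u, fun a ha => ?_, hu, fun w hw => hu0 ⟨w, hw⟩,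
    fun w hw => ?_⟩
  · have ha0 : D a ≠ 0 := by simpa using ha
    exact ⟨D.supportWithinDomain ha0, Int.lt_toNat.2 (lt_of_le_of_ne (hD a) ha0.symm)⟩
  · rw [← (hh w hw).continuousAt.eventuallyEq_nhds_iff_eventuallyEq_nhdsNE
      (hpoly w hw).continuousAt]
    refine (hh w hw).meromorphicAt.eventuallyEq_nhdsNE_of_eventuallyEq_codiscreteWithin
      (hpoly w hw).meromorphicAt hw (hU' w hw) ?_
    change _ =ᶠ[_] _ • _ at hfactor
    rw [hprod] at hfactor
    exact hfactor

lemma logDeriv_prod_pow_mul {Z : Finset ℂ} {m : ℂ → ℕ} {u : ℂ → ℂ} {w : ℂ} (hw : w ∉ Z)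
    (hu : DifferentiableAt ℂ u w) (hu0 : u w ≠ 0) :
    logDeriv (fun z => (∏ a ∈ Z, (z - a) ^ m a) * u z) w =
      ∑ a ∈ Z, (w - a)⁻¹ • (m a : ℂ) + logDeriv u w := by
  have hsub : ∀ a ∈ Z, w - a ≠ 0 := fun a ha => sub_ne_zero.2 fun h => hw (h ▸ ha)
  rw [logDeriv_mul w (Finset.prod_ne_zero_iff.2 fun a ha => pow_ne_zero _ (hsub a ha)) hu0
    (by fun_prop) hu,
    logDeriv_prod (f := fun a z => (z - a) ^ m a) (fun a ha => pow_ne_zero _ (hsub a ha))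
      fun a _ => by fun_prop]
  congr 1
  refine Finset.sum_congr rfl fun a _ => ?_
  rw [logDeriv_fun_pow (by fun_prop)]
  simp [logDeriv_apply, mul_comm]

theorem circleIntegral_mul_logDeriv {h φ : ℂ → ℂ} {c : ℂ} {r : ℝ} (hr : 0 < r) {Z : Finset ℂ}
    {m : ℂ → ℕ} {u : ℂ → ℂ} (hZ : ∀ a ∈ Z, a ∈ ball c r)
    (hu : AnalyticOnNhd ℂ u (closedBall c r)) (hu0 : ∀ w ∈ closedBall c r, u w ≠ 0)
    (hh : ∀ w ∈ closedBall c r, h =ᶠ[𝓝 w] fun z => (∏ a ∈ Z, (z - a) ^ m a) * u z)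
    (hφ : DifferentiableOn ℂ φ (closedBall c r)) :
    ∮ w in C(c, r), φ w * logDeriv h w = 2 * π * Complex.I * ∑ a ∈ Z, m a * φ a := by
  have hZ' : ∀ a ∈ Z, ∀ w ∈ sphere c r, w - a ≠ 0 := fun a ha w hw =>
    sub_ne_zero.2 fun h => sphere_disjoint_ball.le_bot ⟨hw, h ▸ hZ a ha⟩
  have hlog : DifferentiableOn ℂ (fun w => φ w * logDeriv u w) (closedBall c r) :=
    hφ.mul (hu.deriv.differentiableOn.div hu.differentiableOn hu0)
  have hpole : ∀ a ∈ Z, CircleIntegrable (fun w => (w - a)⁻¹ • (m a * φ w)) c r := fun a ha =>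
    (ContinuousOn.smul (ContinuousOn.inv₀ (by fun_prop) (hZ' a ha))
      (continuousOn_const.mul (hφ.continuousOn.mono sphere_subset_closedBall))).circleIntegrable
      hr.le
  calc ∮ w in C(c, r), φ w * logDeriv h w
      = ∮ w in C(c, r), (∑ a ∈ Z, (w - a)⁻¹ • (m a * φ w) + φ w * logDeriv u w) := by
        refine circleIntegral.integral_congr hr.le fun w hw => ?_
        have hwc := sphere_subset_closedBall hw
        simp only [(logDeriv_congr_nhds (hh w hwc)).self_of_nhds]
        rw [logDeriv_prod_pow_mul (fun hwZ => hZ' w hwZ w hw (sub_self w))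
          (hu w hwc).differentiableAt (hu0 w hwc), mul_add, Finset.mul_sum]
        simp only [smul_eq_mul]
        congr 1
        exact Finset.sum_congr rfl fun a _ => by ring
    _ = ∑ a ∈ Z, ∮ w in C(c, r), (w - a)⁻¹ • (m a * φ w) := by
        rw [circleIntegral.integral_add (CircleIntegrable.fun_sum Z hpole)
          ((hlog.continuousOn.mono sphere_subset_closedBall).circleIntegrable hr.le),
          circleIntegral.integral_fun_sum hpole,
          (hlog.diffContOnCl_ball subset_rfl).circleIntegral_eq_zero hr.le, add_zero]
    _ = 2 * π * Complex.I * ∑ a ∈ Z, m a * φ a := by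
        rw [Finset.mul_sum]
        refine Finset.sum_congr rfl fun a ha => ?_
        rw [(hφ.const_mul (m a : ℂ)).circleIntegral_sub_inv_smul (hZ a ha), smul_eq_mul]

theorem exists_zeros_circleIntegral_mul_logDeriv {h : ℂ → ℂ} {c : ℂ} {r : ℝ} (hr : 0 < r)
    (hh : AnalyticOnNhd ℂ h (closedBall c r)) (hsphere : ∀ w ∈ sphere c r, h w ≠ 0) :
    ∃ (Z : Finset ℂ) (m : ℂ → ℕ), (∀ w, w ∈ Z ↔ w ∈ ball c r ∧ h w = 0) ∧ (∀ a ∈ Z, 0 < m a) ∧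
      ∀ φ : ℂ → ℂ, DifferentiableOn ℂ φ (closedBall c r) →
        ∮ w in C(c, r), φ w * logDeriv h w = 2 * π * Complex.I * ∑ a ∈ Z, m a * φ a := by
  have hpre : IsPreconnected (closedBall c r) := (convex_closedBall c r).isPreconnected
  obtain ⟨b, hb⟩ : (sphere c r).Nonempty := NormedSpace.sphere_nonempty.2 hr.le
  have hbr : b ∈ closedBall c r := sphere_subset_closedBall hb
  have hcb : c ≠ b := fun hcb => (ne_of_mem_sphere hb hr.ne') hcb.symm
  obtain ⟨Z, m, u, hZ, hu, hu0, hfactor⟩ := exists_finset_prod_pow_mul_of_analyticOnNhd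
    (isCompact_closedBall c r)
    (hpre.preperfect_of_nontrivial ⟨c, mem_closedBall_self hr.le, b, hbr, hcb⟩) hh
    fun z hz hzero => hsphere b hb
      (hh.eqOn_zero_of_preconnected_of_eventuallyEq_zero hpre hz
        (by simpa [EventuallyEq] using hzero) hbr)
  have hroot : ∀ w ∈ closedBall c r, h w = 0 ↔ w ∈ Z := fun w hw => by
    rw [(hfactor w hw).self_of_nhds, mul_eq_zero, or_iff_left (hu0 w hw), Finset.prod_eq_zero_iff]
    constructor
    · rintro ⟨a, ha, hwa⟩
      rwa [sub_eq_zero.1 (eq_zero_of_pow_eq_zero hwa)]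
    · exact fun hwZ => ⟨w, hwZ, by rw [sub_self, zero_pow (hZ w hwZ).2.ne']⟩
  have hball : ∀ a ∈ Z, a ∈ ball c r := fun a ha =>
    (mem_closedBall.1 (hZ a ha).1).lt_of_ne fun has =>
      hsphere a has ((hroot a (hZ a ha).1).2 ha)
  exact ⟨Z, m, fun w => ⟨fun hw => ⟨hball w hw, (hroot w (hZ w hw).1).2 hw⟩,
    fun hw => (hroot w (ball_subset_closedBall hw.1)).1 hw.2⟩, fun a ha => (hZ a ha).2,
    fun φ hφ => circleIntegral_mul_logDeriv hr hball hu hu0 hfactor hφ⟩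

end ArgumentPrinciple

section HankelDeterminants

/-- The determinant of the `k × k` Hankel matrix `(P (i + j))` of a sequence `P`. When `P` is the
sequence of power sums of a finite set of nodes, its nonvanishing detects the number of nodes. -/
def hankelDet {R : Type*} [CommRing R] (P : ℕ → R) (k : ℕ) : R :=
  (Matrix.of fun i j : Fin k => P (i + j)).det

lemma hankelDet_zero {R : Type*} [CommRing R] (P : ℕ → R) : hankelDet P 0 = 1 :=
  Matrix.det_isEmpty

lemma hankelDet_eq_prod_mul_det_vandermonde_sq {R : Type*} [CommRing R] {d : ℕ} {P : ℕ → R}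
    {c a : Fin d → R} (hP : ∀ k, P k = ∑ i, c i * a i ^ k) :
    hankelDet P d = (∏ i, c i) * (Matrix.vandermonde a).det ^ 2 := by
  have hfactor : (Matrix.of fun i j : Fin d => P (i + j)) =
      (Matrix.vandermonde a).transpose * Matrix.diagonal c * Matrix.vandermonde a := by
    ext i j
    rw [Matrix.mul_apply, Matrix.of_apply, hP]
    refine Finset.sum_congr rfl fun l _ => ?_
    rw [Matrix.mul_diagonal, Matrix.transpose_apply, Matrix.vandermonde_apply,
      Matrix.vandermonde_apply]
    ring
  rw [hankelDet, hfactor, Matrix.det_mul, Matrix.det_mul, Matrix.det_transpose,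
    Matrix.det_diagonal]
  ring

section Field

variable {K : Type*} [Field K] {P : ℕ → K} {Z : Finset K} {m : K → K}

lemma hankelDet_eq_zero_of_card_lt (hP : ∀ k, P k = ∑ a ∈ Z, m a * a ^ k) {k : ℕ}
    (hk : Z.card < k) : hankelDet P k = 0 := by
  let A : Matrix (Fin k) Z K := Matrix.of fun i a => m a * (a : K) ^ (i : ℕ)
  let B : Matrix Z (Fin k) K := Matrix.of fun a j => (a : K) ^ (j : ℕ)
  have hfactor : (Matrix.of fun i j : Fin k => P (i + j)) = A * B := by
    ext i j
    rw [Matrix.mul_apply, Matrix.of_apply, hP, ← Finset.sum_coe_sort Z]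
    refine Finset.sum_congr rfl fun a _ => ?_
    rw [pow_add, ← mul_assoc]
    rfl
  by_contra hne
  refine hk.not_ge ?_
  calc k = (A * B).rank := by
        rw [← hfactor, Matrix.rank_of_isUnit _
          ((Matrix.isUnit_iff_isUnit_det _).2 (isUnit_iff_ne_zero.2 hne)), Fintype.card_fin]
    _ ≤ A.rank := Matrix.rank_mul_le_left A B
    _ ≤ Z.card := by simpa using A.rank_le_card_width

lemma hankelDet_card (hP : ∀ k, P k = ∑ a ∈ Z, m a * a ^ k) :
    hankelDet P Z.card =
      (∏ a ∈ Z, m a) * (Matrix.vandermonde fun i => (Z.equivFin.symm i : K)).det ^ 2 := by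
  rw [hankelDet_eq_prod_mul_det_vandermonde_sq (c := fun i => m (Z.equivFin.symm i))
    (a := fun i => (Z.equivFin.symm i : K)), Equiv.prod_comp Z.equivFin.symm fun a : Z => m a,
    Finset.prod_coe_sort]
  intro k
  rw [hP, Equiv.sum_comp Z.equivFin.symm fun a : Z => m a * (a : K) ^ k,
    Finset.sum_coe_sort Z fun a => m a * a ^ k]

lemma hankelDet_card_ne_zero (hP : ∀ k, P k = ∑ a ∈ Z, m a * a ^ k) (hm : ∀ a ∈ Z, m a ≠ 0) :
    hankelDet P Z.card ≠ 0 := by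
  rw [hankelDet_card hP]
  exact mul_ne_zero (Finset.prod_ne_zero_iff.2 hm) (pow_ne_zero 2
    (Matrix.det_vandermonde_ne_zero_iff.2 (Subtype.val_injective.comp Z.equivFin.symm.injective)))

end Field

section NormedField

lemma prod_le_of_mem_of_le_one {ι : Type*} {s : Finset ι} {f : ι → ℝ} (h0 : ∀ i ∈ s, 0 ≤ f i)
    (h1 : ∀ i ∈ s, f i ≤ 1) {i : ι} (hi : i ∈ s) : ∏ j ∈ s, f j ≤ f i := by
  classical
  rw [← Finset.mul_prod_erase s f hi]
  exact mul_le_of_le_one_right (h0 i hi) (Finset.prod_le_one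
    (fun j hj => h0 j (Finset.mem_of_mem_erase hj)) fun j hj => h1 j (Finset.mem_of_mem_erase hj))

variable {K : Type*} [NormedField K]

lemma norm_det_vandermonde_le {d : ℕ} {v : Fin d → K} (hv : ∀ i j, ‖v i - v j‖ ≤ 1)
    {i j : Fin d} (hij : i ≠ j) : ‖(Matrix.vandermonde v).det‖ ≤ ‖v i - v j‖ := by
  wlog hlt : i < j generalizing i j
  · rw [norm_sub_rev]
    exact this hij.symm (hij.lt_or_gt.resolve_left hlt)
  rw [Matrix.det_vandermonde, norm_prod, norm_sub_rev]
  simp_rw [norm_prod]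
  have hrow : ∀ k, ∏ l ∈ Finset.Ioi k, ‖v l - v k‖ ≤ 1 := fun k =>
    Finset.prod_le_one (fun _ _ => norm_nonneg _) fun l _ => hv l k
  calc ∏ k, ∏ l ∈ Finset.Ioi k, ‖v l - v k‖ ≤ ∏ l ∈ Finset.Ioi i, ‖v l - v i‖ :=
        prod_le_of_mem_of_le_one (f := fun k => ∏ l ∈ Finset.Ioi k, ‖v l - v k‖)
          (fun _ _ => by positivity) (fun k _ => hrow k) (Finset.mem_univ i)
    _ ≤ ‖v j - v i‖ := prod_le_of_mem_of_le_one (f := fun l => ‖v l - v i‖)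
          (fun _ _ => norm_nonneg _) (fun l _ => hv l i) (Finset.mem_Ioi.2 hlt)

lemma norm_hankelDet_card_le {P : ℕ → K} {Z : Finset K} {m : K → K}
    (hP : ∀ k, P k = ∑ a ∈ Z, m a * a ^ k) {D : ℝ} (hm : ∀ a ∈ Z, ‖m a‖ ≤ D)
    (hZ : ∀ a ∈ Z, ∀ b ∈ Z, ‖a - b‖ ≤ 1) {a b : K} (ha : a ∈ Z) (hb : b ∈ Z) (hab : a ≠ b) :
    ‖hankelDet P Z.card‖ ≤ D ^ Z.card * ‖a - b‖ := by
  have hD : 0 ≤ D := (norm_nonneg _).trans (hm a ha)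
  have hdet : ‖(Matrix.vandermonde fun i => (Z.equivFin.symm i : K)).det‖ ≤ ‖a - b‖ := by
    simpa using norm_det_vandermonde_le (v := fun i => (Z.equivFin.symm i : K))
      (fun i j => hZ _ (Z.equivFin.symm i).2 _ (Z.equivFin.symm j).2)
      (i := Z.equivFin ⟨a, ha⟩) (j := Z.equivFin ⟨b, hb⟩) (by simpa using hab)
  rw [hankelDet_card hP, norm_mul, norm_pow, norm_prod]
  gcongr
  · calc ∏ a ∈ Z, ‖m a‖ ≤ ∏ _a ∈ Z, D := Finset.prod_le_prod (fun _ _ => norm_nonneg _) hm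
      _ = D ^ Z.card := Finset.prod_const D
  · calc _ ≤ ‖a - b‖ ^ 2 := by gcongr
      _ ≤ ‖a - b‖ := pow_le_of_le_one (norm_nonneg _) (hZ a ha b hb) two_ne_zero

end NormedField

end HankelDeterminants

section FibreZeros

variable {E : Type*} [NormedAddCommGroup E] [NormedSpace ℂ E] {G : E → ℂ} {v : E}

/-- The sum, with multiplicities, of the `k`-th powers of the zeros in the disc `|w| < r` of
`w ↦ G (z + w • v)`, written as a contour integral so that its dependence on `z` is visibly
holomorphic. -/
def zeroMoment (G : E → ℂ) (v : E) (r : ℝ) (k : ℕ) (z : E) : ℂ :=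
  (2 * π * Complex.I)⁻¹ *
    ∮ w in C(0, r), w ^ k * (lineDeriv ℂ G (z + w • v) v / G (z + w • v))

lemma logDeriv_comp_add_smul (G : E → ℂ) (z v : E) (w : ℂ) :
    logDeriv (fun w => G (z + w • v)) w = lineDeriv ℂ G (z + w • v) v / G (z + w • v) := by
  have hderiv := deriv_comp_const_add (fun w : ℂ => G (z + w • v)) w 0
  rw [add_zero] at hderiv
  rw [logDeriv_apply, ← hderiv, lineDeriv]
  simp only [add_smul, add_assoc]

lemma analyticOnNhd_comp_add_smul {s : Set E} (hs : IsOpen s) (hG : DifferentiableOn ℂ G s)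
    (z v : E) :
    AnalyticOnNhd ℂ (fun w : ℂ => G (z + w • v)) ((fun w : ℂ => z + w • v) ⁻¹' s) :=
  (hG.fun_comp (f := fun w : ℂ => z + w • v) (by fun_prop) fun _ hw => hw).analyticOnNhd
    (hs.preimage (by fun_prop))

lemma exists_zeroMoment_eq_sum {r : ℝ} (hr : 0 < r) {s : Set E} (hs : IsOpen s)
    (hG : DifferentiableOn ℂ G s) {z : E} (hz : ∀ w ∈ closedBall (0 : ℂ) r, z + w • v ∈ s)
    (hne : ∀ w ∈ sphere (0 : ℂ) r, G (z + w • v) ≠ 0) :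
    ∃ (Z : Finset ℂ) (m : ℂ → ℕ), (∀ w, w ∈ Z ↔ w ∈ ball 0 r ∧ G (z + w • v) = 0) ∧
      (∀ a ∈ Z, 0 < m a) ∧ ∀ k, zeroMoment G v r k z = ∑ a ∈ Z, m a * a ^ k := by
  obtain ⟨Z, m, hZ, hm, hsum⟩ := exists_zeros_circleIntegral_mul_logDeriv hr
    ((analyticOnNhd_comp_add_smul hs hG z v).mono hz) hne
  refine ⟨Z, m, hZ, hm, fun k => ?_⟩
  simp only [zeroMoment, ← logDeriv_comp_add_smul]
  rw [hsum (fun w => w ^ k) (by fun_prop), inv_mul_cancel_left₀ Complex.two_pi_I_ne_zero]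

lemma differentiableOn_zeroMoment [FiniteDimensional ℂ E] {r : ℝ} (hr : 0 ≤ r) {s t : Set E}
    (hs : IsOpen s) (ht : IsOpen t) (hG : DifferentiableOn ℂ G s)
    (hst : ∀ z ∈ t, ∀ w ∈ sphere (0 : ℂ) r, z + w • v ∈ s)
    (hne : ∀ z ∈ t, ∀ w ∈ sphere (0 : ℂ) r, G (z + w • v) ≠ 0) (k : ℕ) :
    DifferentiableOn ℂ (zeroMoment G v r k) t := by
  have hG' := differentiableOn_lineDeriv hs hG v
  have hmaps : MapsTo (fun q : ℂ × E => q.2 + q.1 • v) (sphere 0 r ×ˢ t) s :=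
    fun q hq => hst q.2 hq.2 q.1 hq.1
  refine DifferentiableOn.const_mul
    (differentiableOn_circleIntegral_of_continuousOn_uncurry hr ht ?_ fun w hw => ?_) _
  · have hcont : ContinuousOn (fun q : ℂ × E => q.2 + q.1 • v) (sphere 0 r ×ˢ t) := by fun_prop
    exact ContinuousOn.mul (f := fun q : ℂ × E => q.1 ^ k) (by fun_prop)
      ((hG'.continuousOn.comp hcont hmaps).div (hG.continuousOn.comp hcont hmaps)
        fun q hq => hne q.2 hq.2 q.1 hq.1)
  · have htranslate : MapsTo (fun z => z + w • v) t s := fun z hz => hst z hz w hw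
    simp only [div_eq_mul_inv]
    exact ((hG'.fun_comp (by fun_prop) htranslate).mul
      ((hG.fun_comp (by fun_prop) htranslate).inv fun z hz => hne z hz w hw)).const_mul _

lemma eventually_forall_mem_sphere_ne_zero {s : Set E} (hs : IsOpen s) (hG : DifferentiableOn ℂ G s)
    {r : ℝ} (hrs : ∀ w ∈ closedBall (0 : ℂ) r, w • v ∈ s)
    (hne : ∀ w ∈ sphere (0 : ℂ) r, G (w • v) ≠ 0) :
    ∀ᶠ z in 𝓝 0, (∀ w ∈ closedBall (0 : ℂ) r, z + w • v ∈ s) ∧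
      ∀ w ∈ sphere (0 : ℂ) r, G (z + w • v) ≠ 0 := by
  have hcont : Continuous fun q : E × ℂ => q.1 + q.2 • v := by fun_prop
  refine ((isCompact_closedBall 0 r).eventually_forall_of_forall_eventually fun w hw => ?_).and
    ((isCompact_sphere 0 r).eventually_forall_of_forall_eventually fun w hw => ?_)
  · exact hcont.continuousAt.eventually (hs.mem_nhds (by simpa using hrs w hw))
  · have hws : 0 + w • v ∈ s := by simpa using hrs w (sphere_subset_closedBall hw)
    exact (ContinuousAt.comp (f := fun q : E × ℂ => q.1 + q.2 • v)
      (hG.continuousOn.continuousAt (hs.mem_nhds hws)) hcont.continuousAt).eventually_ne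
      (by simpa using hne w hw)

lemma exists_radius_forall_mem_sphere_ne_zero {s : Set E} (hs : IsOpen s) (h0 : 0 ∈ s)
    (hG : DifferentiableOn ℂ G s) (hv : ∃ᶠ w : ℂ in 𝓝 0, G (w • v) ≠ 0) {R : ℝ} (hR : 0 < R) :
    ∃ r ∈ Ioo 0 R, (∀ w ∈ closedBall (0 : ℂ) r, w • v ∈ s) ∧
      ∀ w ∈ sphere (0 : ℂ) r, G (w • v) ≠ 0 := by
  have hopen : IsOpen ((fun w : ℂ => w • v) ⁻¹' s) := hs.preimage (by fun_prop)
  have hline : AnalyticAt ℂ (fun w : ℂ => G (w • v)) 0 := by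
    simpa using analyticOnNhd_comp_add_smul hs hG 0 v 0 (by simpa using h0)
  have hpunctured : ∀ᶠ w in 𝓝[≠] (0 : ℂ), G (w • v) ≠ 0 :=
    hline.eventually_eq_zero_or_eventually_ne_zero.resolve_left
      fun hzero => hv (by simpa using hzero)
  obtain ⟨r, hr, hrsub⟩ := nhds_basis_closedBall.mem_iff.1 (inter_mem
    (hopen.mem_nhds (by simpa using h0)) (eventually_nhdsWithin_iff.1 hpunctured))
  have hr' : 0 < min r (R / 2) := lt_min hr (half_pos hR)
  have hsub : closedBall (0 : ℂ) (min r (R / 2)) ⊆ closedBall 0 r :=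
    closedBall_subset_closedBall (min_le_left _ _)
  exact ⟨min r (R / 2), ⟨hr', (min_le_right _ _).trans_lt (half_lt_self hR)⟩,
    fun w hw => (hrsub (hsub hw)).1, fun w hw => (hrsub (hsub (sphere_subset_closedBall hw))).2
      (ne_of_mem_sphere hw hr'.ne')⟩

lemma card_le_and_forall_le_of_norm_sum_le {Z : Finset ℂ} {m : ℂ → ℕ} (hm : ∀ a ∈ Z, 0 < m a)
    {D : ℝ} (hD : ‖∑ a ∈ Z, (m a : ℂ)‖ ≤ D) : (Z.card : ℝ) ≤ D ∧ ∀ a ∈ Z, (m a : ℝ) ≤ D := by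
  rw [← Nat.cast_sum, Complex.norm_natCast] at hD
  have hcard : Z.card ≤ ∑ a ∈ Z, m a := by
    simpa using Finset.card_nsmul_le_sum Z m 1 hm
  refine ⟨le_trans (by exact_mod_cast hcard) hD, fun a ha => le_trans ?_ hD⟩
  exact_mod_cast Finset.single_le_sum (fun _ _ => Nat.zero_le _) ha

lemma exists_frequently_and_eventually_forall_gt_not {X : Type*} {l : Filter X}
    {Q : ℕ → X → Prop} {N : ℕ} (h0 : ∃ᶠ x in l, Q 0 x) (hN : ∀ᶠ x in l, ∀ k > N, ¬ Q k x) :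
    ∃ k, (∃ᶠ x in l, Q k x) ∧ ∀ᶠ x in l, ∀ j > k, ¬ Q j x := by
  classical
  let k := Nat.findGreatest (fun k => ∃ᶠ x in l, Q k x) N
  have hk : ∀ᶠ x in l, ∀ j ∈ Finset.Ioc k N, ¬ Q j x := by
    rw [eventually_all_finset]
    intro j hj
    rw [Finset.mem_Ioc] at hj
    exact not_frequently.1 (Nat.findGreatest_is_greatest hj.1 hj.2)
  refine ⟨k, Nat.findGreatest_spec (P := fun k => ∃ᶠ x in l, Q k x) N.zero_le h0, ?_⟩
  filter_upwards [hN, hk] with x hxN hxk j hj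
  by_cases hjN : j ≤ N
  · exact hxk j (Finset.mem_Ioc.2 ⟨hj, hjN⟩)
  · exact hxN j (not_le.1 hjN)

lemma differentiableOn_hankelDet {P : ℕ → E → ℂ} {s : Set E}
    (hP : ∀ k, DifferentiableOn ℂ (P k) s) (k : ℕ) :
    DifferentiableOn ℂ (fun z => hankelDet (fun j => P j z) k) s := by
  simp only [hankelDet, Matrix.det_apply', Matrix.of_apply]
  exact DifferentiableOn.fun_sum fun σ _ => DifferentiableOn.const_mul (fun z hz =>
    (HasFDerivWithinAt.finsetProd fun i _ => (hP _ z hz).hasFDerivWithinAt).differentiableWithinAt)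
    _

variable [FiniteDimensional ℂ E]

lemma exists_differentiableOn_zeroMoment_and_eq_sum (hG : ∀ᶠ z in 𝓝 0, DifferentiableAt ℂ G z)
    (hv : ∃ᶠ w : ℂ in 𝓝 0, G (w • v) ≠ 0) :
    ∃ r ∈ Ioo (0 : ℝ) (1 / 2), ∃ D > (0 : ℝ), ∃ t : Set E, IsOpen t ∧ 0 ∈ t ∧
      (∀ k, DifferentiableOn ℂ (zeroMoment G v r k) t) ∧
      ∀ z ∈ t, ∃ (Z : Finset ℂ) (m : ℂ → ℕ),
        (∀ w, w ∈ Z ↔ w ∈ ball 0 r ∧ G (z + w • v) = 0) ∧ (∀ a ∈ Z, 0 < m a) ∧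
        (∀ k, zeroMoment G v r k z = ∑ a ∈ Z, m a * a ^ k) ∧
        Z.card ≤ D ∧ ∀ a ∈ Z, (m a : ℝ) ≤ D := by
  obtain ⟨s, hsG, hs, h0s⟩ := _root_.eventually_nhds_iff.1 hG
  have hGs : DifferentiableOn ℂ G s := fun z hz => (hsG z hz).differentiableWithinAt
  obtain ⟨r, hr, hrs, hrne⟩ :=
    exists_radius_forall_mem_sphere_ne_zero hs h0s hGs hv (half_pos one_pos)
  obtain ⟨t, htG, ht, h0t⟩ := _root_.eventually_nhds_iff.1
    (eventually_forall_mem_sphere_ne_zero hs hGs hrs hrne)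
  have hP : ∀ k, DifferentiableOn ℂ (zeroMoment G v r k) t := differentiableOn_zeroMoment hr.1.le
    hs ht hGs (fun z hz w hw => (htG z hz).1 w (sphere_subset_closedBall hw))
    fun z hz => (htG z hz).2
  let D : ℝ := ‖zeroMoment G v r 0 0‖ + 1
  refine ⟨r, hr, D, by positivity, t ∩ (fun z => ‖zeroMoment G v r 0 z‖) ⁻¹' Iio D,
    (hP 0).continuousOn.norm.isOpen_inter_preimage ht isOpen_Iio,
    ⟨h0t, lt_add_one ‖zeroMoment G v r 0 0‖⟩, fun k => (hP k).mono inter_subset_left,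
    fun z hz => ?_⟩
  obtain ⟨Z, m, hZ, hm, hsum⟩ :=
    exists_zeroMoment_eq_sum hr.1 hs hGs (htG z hz.1).1 (htG z hz.1).2
  have hzD : ‖zeroMoment G v r 0 z‖ < D := hz.2
  simp only [hsum, pow_zero, mul_one] at hzD
  exact ⟨Z, m, hZ, hm, hsum, card_le_and_forall_le_of_norm_sum_le hm hzD.le⟩

-- For generic `z` the number of zeros on the fibre through `z` is locally constant, and the
-- Hankel determinant of that size, formed from their moments, is their discriminant up to weights.
theorem exists_differentiableAt_norm_le_norm_sub_of_zeros {l : Filter E} [l.NeBot] (hl : l ≤ 𝓝 0)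
    (hG : ∀ᶠ z in 𝓝 0, DifferentiableAt ℂ G z) (hv : ∃ᶠ w : ℂ in 𝓝 0, G (w • v) ≠ 0) :
    ∃ (Δ : E → ℂ), ∃ r > 0, (∀ᶠ z in 𝓝 0, DifferentiableAt ℂ Δ z) ∧ (∃ᶠ z in l, Δ z ≠ 0) ∧
      ∀ᶠ z in l,
        {w ∈ ball (0 : ℂ) r | G (z + w • v) = 0}.Pairwise fun α β => ‖Δ z‖ ≤ ‖α - β‖ := by
  obtain ⟨r, ⟨hr, hr2⟩, D, hD, t, ht, h0t, hdiff, hzeros⟩ :=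
    exists_differentiableOn_zeroMoment_and_eq_sum hG hv
  let P : E → ℕ → ℂ := fun z k => zeroMoment G v r k z
  have htl : ∀ᶠ z in l, z ∈ t := hl (ht.mem_nhds h0t)
  have hQ0 : ∃ᶠ z in l, hankelDet (P z) 0 ≠ 0 :=
    Frequently.of_forall fun z => by simp [hankelDet_zero]
  have hQgt : ∀ᶠ z in l, ∀ k > ⌊D⌋₊, ¬ hankelDet (P z) k ≠ 0 := htl.mono fun z hz k hk => by
    obtain ⟨Z, m, -, -, hsum, hcard, -⟩ := hzeros z hz
    exact not_not.2 (hankelDet_eq_zero_of_card_lt hsum ((Nat.le_floor hcard).trans_lt hk))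
  obtain ⟨k, hk, hkgt⟩ := exists_frequently_and_eventually_forall_gt_not hQ0 hQgt
  have hDk : (D : ℂ) ^ k ≠ 0 := pow_ne_zero k (Complex.ofReal_ne_zero.2 hD.ne')
  refine ⟨fun z => hankelDet (P z) k / D ^ k, r, hr, ?_, hk.mono fun z hz => div_ne_zero hz hDk, ?_⟩
  · filter_upwards [ht.mem_nhds h0t] with z hz
    exact ((differentiableOn_hankelDet hdiff k).differentiableAt (ht.mem_nhds hz)).mul_const _
  filter_upwards [htl, hkgt] with z hz hzk α hα β hβ hαβ
  obtain ⟨Z, m, hZ, hm, hsum, -, hmD⟩ := hzeros z hz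
  by_cases hz0 : hankelDet (P z) k = 0
  · simp [hz0]
  have hcard : Z.card = k := by
    refine le_antisymm (not_lt.1 fun hlt => hzk Z.card hlt ?_) (not_lt.1 fun hlt => hz0 ?_)
    · exact hankelDet_card_ne_zero hsum fun a ha => Nat.cast_ne_zero.2 (hm a ha).ne'
    · exact hankelDet_eq_zero_of_card_lt hsum hlt
  have hdiam : ∀ a ∈ Z, ∀ b ∈ Z, ‖a - b‖ ≤ 1 := fun a ha b hb => by
    have hnorm : ∀ c ∈ Z, ‖c‖ < r := fun c hc => mem_ball_zero_iff.1 ((hZ c).1 hc).1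
    linarith [norm_sub_le a b, hnorm a ha, hnorm b hb]
  have hle := norm_hankelDet_card_le hsum (D := D) (by simpa using hmD) hdiam ((hZ α).2 hα)
    ((hZ β).2 hβ) hαβ
  rw [hcard] at hle
  rw [norm_div, norm_pow, Complex.norm_real, Real.norm_of_nonneg hD.le]
  exact div_le_of_le_mul₀ (by positivity) (norm_nonneg _) (by rwa [mul_comm])

end FibreZeros

section Complexification

variable {E ι : Type*} [NormedAddCommGroup E] [NormedSpace ℝ E] [Fintype ι]

/-- The complexification of a real power series: the coordinates with respect to `b` are allowed to
take complex values. -/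
def complexifySeries (b : Module.Basis ι ℝ E) (p : FormalMultilinearSeries ℝ E ℂ) :
    FormalMultilinearSeries ℂ (ι → ℂ) ℂ := fun k =>
  ∑ σ : Fin k → ι, p k (b ∘ σ) •
    (ContinuousMultilinearMap.mkPiAlgebra ℂ (Fin k) ℂ).compContinuousLinearMap
      fun j => ContinuousLinearMap.proj (R := ℂ) (φ := fun _ : ι => ℂ) (σ j)

variable {b : Module.Basis ι ℝ E} {p : FormalMultilinearSeries ℝ E ℂ}

lemma complexifySeries_apply (k : ℕ) (u : Fin k → ι → ℂ) :
    complexifySeries b p k u = ∑ σ : Fin k → ι, p k (b ∘ σ) * ∏ j, u j (σ j) := by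
  simp [complexifySeries]

lemma norm_complexifySeries_le (k : ℕ) :
    ‖complexifySeries b p k‖ ≤ ‖p k‖ * (∑ i, ‖b i‖) ^ k := by
  refine ContinuousMultilinearMap.opNorm_le_bound (by positivity) fun u => ?_
  rw [complexifySeries_apply, Fintype.sum_pow, Finset.mul_sum, Finset.sum_mul]
  refine norm_sum_le_of_le _ fun σ _ => ?_
  rw [norm_mul, norm_prod]
  gcongr with j
  · exact (p k).le_opNorm (b ∘ σ)
  · exact norm_le_pi_norm (u j) (σ j)

lemma complexifySeries_radius_pos (hp : 0 < p.radius) : 0 < (complexifySeries b p).radius := by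
  obtain ⟨C, r, hC, hr, hbound⟩ := p.le_mul_pow_of_radius_pos hp
  let B : ℝ := r * ∑ i, ‖b i‖ + 1
  have hB : 0 < B := by positivity
  refine (ENNReal.coe_pos.2 (Real.toNNReal_pos.2 (inv_pos.2 hB))).trans_le
    ((complexifySeries b p).le_radius_of_bound C fun k => ?_)
  rw [Real.coe_toNNReal _ (inv_pos.2 hB).le, inv_pow, mul_inv_le_iff₀ (by positivity)]
  calc ‖complexifySeries b p k‖ ≤ ‖p k‖ * (∑ i, ‖b i‖) ^ k := norm_complexifySeries_le k
    _ ≤ C * r ^ k * (∑ i, ‖b i‖) ^ k := by gcongr; exact hbound k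
    _ = C * (r * ∑ i, ‖b i‖) ^ k := by rw [mul_pow, mul_assoc]
    _ ≤ C * B ^ k := by gcongr; exact (lt_add_one _).le

/-- The coordinates of a vector with respect to a real basis, viewed as complex numbers. -/
def complexCoords [FiniteDimensional ℝ E] (b : Module.Basis ι ℝ E) : E →L[ℝ] (ι → ℂ) :=
  ContinuousLinearMap.pi fun i => Complex.ofRealCLM.comp (b.coord i).toContinuousLinearMap

lemma complexifySeries_apply_complexCoords [FiniteDimensional ℝ E] (k : ℕ) (x : E) :
    complexifySeries b p k (fun _ => complexCoords b x) = p k fun _ => x := by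
  classical
  calc complexifySeries b p k (fun _ => complexCoords b x)
      = ∑ σ : Fin k → ι, p k fun j => b.repr x (σ j) • b (σ j) := by
        rw [complexifySeries_apply]
        refine Finset.sum_congr rfl fun σ _ => ?_
        rw [(p k).map_smul_univ (fun j => b.repr x (σ j)) fun j => b (σ j), Complex.real_smul,
          Complex.ofReal_prod, mul_comm]
        rfl
    _ = p k fun _ => ∑ i, b.repr x i • b i :=
        ((p k).toMultilinearMap.map_sum fun _ i => b.repr x i • b i).symm
    _ = p k fun _ => x := by rw [b.sum_repr]

theorem exists_analyticAt_comp_eventuallyEq [FiniteDimensional ℝ E] {g : E → ℂ}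
    (hg : AnalyticAt ℝ g 0) :
    ∃ (n : ℕ) (L : E →L[ℝ] (Fin n → ℂ)) (G : (Fin n → ℂ) → ℂ),
      AnalyticAt ℂ G 0 ∧ g =ᶠ[𝓝 0] G ∘ L := by
  obtain ⟨p, R, hp⟩ := hg
  let b := Module.finBasis ℝ E
  let q := complexifySeries b p
  have hq : 0 < q.radius := complexifySeries_radius_pos (hp.r_pos.trans_le hp.r_le)
  refine ⟨_, complexCoords b, q.sum, (q.hasFPowerSeriesOnBall hq).analyticAt, ?_⟩
  have hnear : ∀ᶠ x in 𝓝 0, complexCoords b x ∈ eball 0 q.radius :=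
    ((complexCoords b).continuous.tendsto' 0 0 (map_zero _)).eventually (eball_mem_nhds 0 hq)
  filter_upwards [hnear, eball_mem_nhds 0 hp.r_pos] with x hxq hxp
  have hsum := q.hasSum hxq
  simp only [q, complexifySeries_apply_complexCoords] at hsum
  simpa using (hp.hasSum hxp).unique hsum

end Complexification

section HolomorphicExtension

variable {E : Type*} [NormedAddCommGroup E] [NormedSpace ℝ E]

/-- Near the origin, `g` is the restriction of a holomorphic function of several complex variables
along a real-linear map. On finite-dimensional spaces this amounts to real-analyticity at `0`, but
contour integrals are more easily shown to be complex differentiable than analytic. -/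
def HasHolomorphicExtension (g : E → ℂ) : Prop :=
  ∃ (n : ℕ) (L : E →L[ℝ] (Fin n → ℂ)) (G : (Fin n → ℂ) → ℂ),
    (∀ᶠ z in 𝓝 0, DifferentiableAt ℂ G z) ∧ g =ᶠ[𝓝 0] G ∘ L

lemma hasHolomorphicExtension_of_analyticAt [FiniteDimensional ℝ E] {g : E → ℂ}
    (hg : AnalyticAt ℝ g 0) : HasHolomorphicExtension g := by
  obtain ⟨n, L, G, hG, hgG⟩ := exists_analyticAt_comp_eventuallyEq hg
  exact ⟨n, L, G, hG.eventually_analyticAt.mono fun z hz => hz.differentiableAt, hgG⟩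

namespace HasHolomorphicExtension

variable {g : E → ℂ}

lemma comp_continuousLinearMap {E' : Type*} [NormedAddCommGroup E'] [NormedSpace ℝ E']
    (hg : HasHolomorphicExtension g) (A : E' →L[ℝ] E) : HasHolomorphicExtension (g ∘ A) := by
  obtain ⟨n, L, G, hG, hgG⟩ := hg
  exact ⟨n, L.comp A, G, hG, hgG.comp_tendsto (A.continuous.tendsto' 0 0 (map_zero A))⟩

lemma eventually_continuousAt (hg : HasHolomorphicExtension g) :
    ∀ᶠ x in 𝓝 0, ContinuousAt g x := by
  obtain ⟨n, L, G, hG, hgG⟩ := hg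
  filter_upwards [(L.continuous.tendsto' 0 0 (map_zero L)).eventually hG,
    hgG.eventuallyEq_nhds] with x hx hgx
  exact (hx.continuousAt.comp L.continuous.continuousAt).congr hgx.symm

lemma exists_forall_mem_ball_eq_zero_of_line (hg : HasHolomorphicExtension g) :
    ∃ δ > 0, ∀ a ∈ ball 0 δ, ∀ b ∈ ball 0 δ,
      (∀ᶠ t : ℝ in 𝓝 0, g (a + t • (b - a)) = 0) → g b = 0 := by
  obtain ⟨n, L, G, hG, hgG⟩ := hg
  obtain ⟨R, hR, hGR⟩ := Metric.eventually_nhds_iff_ball.1 hG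
  obtain ⟨δ, hδ, hsub⟩ := Metric.mem_nhds_iff.1 (inter_mem hgG
    ((L.continuous.tendsto' 0 0 (map_zero L)).eventually (ball_mem_nhds 0 hR)))
  refine ⟨δ, hδ, fun a ha b hb hzero => ?_⟩
  let line : ℂ → Fin n → ℂ := fun w => L a + w • (L b - L a)
  have hline : ∀ t : ℝ, line t = L (a + t • (b - a)) := fun t => by
    rw [map_add, map_smul, map_sub, ← Complex.coe_smul]
  have hconvex : Convex ℝ (line ⁻¹' ball 0 R) :=
    ((convex_ball 0 R).translate_preimage_right (L a)).linear_preimage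
      ((LinearMap.toSpanSingleton ℂ (Fin n → ℂ) (L b - L a)).restrictScalars ℝ)
  have hanalytic : AnalyticOnNhd ℂ (G ∘ line) (line ⁻¹' ball 0 R) := analyticOnNhd_comp_add_smul
    isOpen_ball (fun z hz => (hGR z hz).differentiableWithinAt) _ _
  have hreal : ∀ᶠ t : ℝ in 𝓝 0, (G ∘ line) t = 0 := by
    have hmem : ∀ᶠ t : ℝ in 𝓝 0, a + t • (b - a) ∈ ball 0 δ :=
      (Continuous.tendsto' (by fun_prop) 0 a (by simp)).eventually (isOpen_ball.mem_nhds ha)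
    filter_upwards [hzero, hmem] with t ht htmem
    rw [comp_apply, hline]
    exact ((hsub htmem).1.symm.trans ht)
  have hfreq : ∃ᶠ w in 𝓝[≠] (0 : ℂ), (G ∘ line) w = 0 := by
    have htendsto : Tendsto (fun t : ℝ => (t : ℂ)) (𝓝[≠] 0) (𝓝[≠] 0) :=
      Complex.continuous_ofReal.continuousWithinAt.tendsto_nhdsWithin fun t ht => by simpa using ht
    exact htendsto.frequently (hreal.filter_mono nhdsWithin_le_nhds).frequently
  have hone := hanalytic.eqOn_zero_of_preconnected_of_frequently_eq_zero hconvex.isPreconnected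
    (show (0 : ℂ) ∈ line ⁻¹' ball 0 R by simpa [line] using (hsub ha).2) hfreq
    (show (1 : ℂ) ∈ line ⁻¹' ball 0 R by simpa [line] using (hsub hb).2)
  rw [(hsub hb).1.out]
  simpa [line] using hone

lemma eventually_frequently_ne_zero (hg : HasHolomorphicExtension g)
    (hne : ∃ᶠ x in 𝓝 0, g x ≠ 0) : ∀ᶠ a in 𝓝 0, ∃ᶠ x in 𝓝 a, g x ≠ 0 := by
  obtain ⟨δ, hδ, hline⟩ := hg.exists_forall_mem_ball_eq_zero_of_line
  filter_upwards [ball_mem_nhds 0 hδ] with a ha hzero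
  obtain ⟨b, hgb, hb⟩ := (hne.and_eventually (ball_mem_nhds 0 hδ)).exists
  exact hgb (hline a ha b hb ((Continuous.tendsto' (by fun_prop) 0 a (by simp)).eventually
    (hzero.mono fun x hx => not_not.1 hx)))

lemma exists_frequently_smul_ne_zero [Nontrivial E] (hg : HasHolomorphicExtension g)
    (hne : ∃ᶠ x in 𝓝 0, g x ≠ 0) : ∃ v ≠ 0, ∃ᶠ t : ℝ in 𝓝 0, g (t • v) ≠ 0 := by
  by_cases hg₀ : g 0 = 0
  · obtain ⟨δ, hδ, hline⟩ := hg.exists_forall_mem_ball_eq_zero_of_line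
    obtain ⟨b, hgb, hb⟩ := (hne.and_eventually (ball_mem_nhds 0 hδ)).exists
    exact ⟨b, fun hb₀ => hgb (hb₀ ▸ hg₀), fun hzero =>
      hgb (hline 0 (mem_ball_self hδ) b hb (by simpa using hzero))⟩
  · obtain ⟨v, hv⟩ := exists_ne (0 : E)
    have hsmul : Tendsto (fun t : ℝ => t • v) (𝓝 0) (𝓝 0) :=
      Continuous.tendsto' (by fun_prop) 0 0 (zero_smul ℝ v)
    exact ⟨v, hv, (hsmul.eventually
      (hg.eventually_continuousAt.self_of_nhds.eventually_ne hg₀)).frequently⟩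

lemma exists_norm_le_abs_sub_of_zeros {g : E × ℝ → ℂ} (hg : HasHolomorphicExtension g)
    (hne : ∃ᶠ t : ℝ in 𝓝 0, g (0, t) ≠ 0) :
    ∃ (Δ : E → ℂ), ∃ r > 0, HasHolomorphicExtension Δ ∧ (∃ᶠ x in 𝓝 0, Δ x ≠ 0) ∧
      ∀ᶠ x in 𝓝 0, {t ∈ Ioo (-r) r | g (x, t) = 0}.Pairwise fun s t => ‖Δ x‖ ≤ |s - t| := by
  obtain ⟨n, L, G, hG, hgG⟩ := hg
  let L₁ : E →L[ℝ] (Fin n → ℂ) := L.comp (ContinuousLinearMap.inl ℝ E ℝ)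
  let v : Fin n → ℂ := L (0, 1)
  have hL : ∀ x (t : ℝ), L (x, t) = L₁ x + (t : ℂ) • v := fun x t => by
    simp [L₁, v, Complex.coe_smul, ← map_smul, ← map_add]
  have hL₁ : Tendsto L₁ (𝓝 0) (𝓝 0) := L₁.continuous.tendsto' 0 0 (map_zero L₁)
  obtain ⟨δ, hδ, hgδ⟩ := Metric.eventually_nhds_iff_ball.1 hgG
  have hgL : ∀ x ∈ ball (0 : E) δ, ∀ t ∈ ball (0 : ℝ) δ, g (x, t) = G (L₁ x + (t : ℂ) • v) :=
    fun x hx t ht => by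
      rw [← hL]
      exact hgδ (x, t) (by rw [← Prod.mk_zero_zero, ← ball_prod_same]; exact ⟨hx, ht⟩)
  have hv : ∃ᶠ w : ℂ in 𝓝 0, G (w • v) ≠ 0 :=
    (Complex.continuous_ofReal.tendsto' 0 0 Complex.ofReal_zero).frequently
      ((hne.and_eventually (ball_mem_nhds 0 hδ)).mono fun t ht => by
        have := hgL 0 (mem_ball_self hδ) t ht.2
        rw [map_zero, zero_add] at this
        exact this ▸ ht.1)
  obtain ⟨Δ, r, hr, hΔ, hΔne, hsep⟩ :=
    exists_differentiableAt_norm_le_norm_sub_of_zeros (l := map L₁ (𝓝 0)) hL₁ hG hv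
  refine ⟨Δ ∘ L₁, min r δ, lt_min hr hδ, ⟨n, L₁, Δ, hΔ, .rfl⟩, hΔne, ?_⟩
  filter_upwards [eventually_map.1 hsep, ball_mem_nhds 0 hδ] with x hx hxδ
  have hzero : ∀ t ∈ {t ∈ Ioo (-min r δ) (min r δ) | g (x, t) = 0},
      (t : ℂ) ∈ {w ∈ ball (0 : ℂ) r | G (L₁ x + w • v) = 0} := fun t ⟨ht, hgt⟩ => by
    have htr := lt_min_iff.1 (abs_lt.2 ht)
    exact ⟨by simpa using htr.1, hgL x hxδ t (by simpa using htr.2) ▸ hgt⟩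
  intro s hs t ht hst
  simpa [← Complex.ofReal_sub] using hx (hzero s hs) (hzero t ht) (by exact_mod_cast hst)

end HasHolomorphicExtension

end HolomorphicExtension

section ComponentsAdhere

variable {X Y : Type*} [TopologicalSpace X] [TopologicalSpace Y]

/-- The connected components of `S` near `p` accumulate at `p`, even after `S` has been cut down to
an arbitrarily small neighbourhood `s` of `p`. -/
def ComponentsAdhere (S : Set X) (p : X) : Prop :=
  ∀ s ∈ 𝓝 p, ∀ᶠ x in 𝓝 p, x ∈ S → p ∈ closure (connectedComponentIn (s ∩ S) x)

lemma componentsAdhere_of_subsingleton [Subsingleton X] (S : Set X) (p : X) :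
    ComponentsAdhere S p := fun _ hs => .of_forall fun x hx =>
  Subsingleton.elim x p ▸ subset_closure
    (mem_connectedComponentIn ⟨Subsingleton.elim p x ▸ mem_of_mem_nhds hs, hx⟩)

lemma ComponentsAdhere.of_preimage_homeomorph (e : X ≃ₜ Y) {S : Set Y} {p : X}
    (h : ComponentsAdhere (e ⁻¹' S) p) : ComponentsAdhere S (e p) := by
  intro s hs
  have hx := h (e ⁻¹' s) (e.continuous.continuousAt hs)
  rw [← e.map_nhds_eq, eventually_map]
  filter_upwards [hx, e.continuous.continuousAt.eventually_mem hs] with x hx hxs hxS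
  have hcomp := e.image_connectedComponentIn (s := e ⁻¹' s ∩ e ⁻¹' S) (x := x) ⟨hxs, hxS⟩
  rw [← preimage_inter, e.image_preimage] at hcomp
  rw [← hcomp, ← e.image_closure]
  exact mem_image_of_mem e (hx hxS)

lemma mem_connectedComponentIn_of_isPreconnected {A K : Set X} {a b z : X}
    (ha : a ∈ connectedComponentIn A z) (hK : IsPreconnected K) (hKA : K ⊆ A) (haK : a ∈ K)
    (hbK : b ∈ K) : b ∈ connectedComponentIn A z := by
  rw [connectedComponentIn_eq ha]
  exact hK.subset_connectedComponentIn haK hKA hbK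

lemma exists_mk_mem_closure_of_fst_mem_closure {W : Set (X × Y)} {K : Set Y} (hK : IsCompact K)
    (hWK : ∀ q ∈ W, q.2 ∈ K) {x : X} (hx : x ∈ closure (Prod.fst '' W)) :
    ∃ y ∈ K, (x, y) ∈ closure W := by
  by_contra! h
  have hev : ∀ᶠ x' in 𝓝 x, ∀ y ∈ K, (x', y) ∉ closure W :=
    hK.eventually_forall_of_forall_eventually fun y hy =>
      isClosed_closure.isOpen_compl.eventually_mem (h y hy)
  obtain ⟨_, ⟨q, hq, rfl⟩, hqn⟩ := ((mem_closure_iff_frequently.1 hx).and_eventually hev).exists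
  exact hqn q.2 (hWK q hq) (subset_closure hq)

variable {A S : Set (X × ℝ)} {x₀ : X} {z : X × ℝ}

lemma eventually_forall_mk_mem_of_le_abs {r : ℝ} (h : ∀ t ≠ 0, |t| ≤ r → S ∈ 𝓝 (x₀, t)) {η : ℝ}
    (hη : 0 < η) : ∀ᶠ x in 𝓝 x₀, ∀ t, η ≤ |t| → |t| ≤ r → (x, t) ∈ S := by
  have hK : IsCompact {t : ℝ | η ≤ |t| ∧ |t| ≤ r} := by
    refine (isCompact_Icc (a := -r) (b := r)).of_isClosed_subset ?_ fun t ht => abs_le.1 ht.2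
    exact (isClosed_le continuous_const continuous_abs).inter
      (isClosed_le continuous_abs continuous_const)
  have hev := hK.eventually_forall_of_forall_eventually (x₀ := x₀) (P := fun x t => (x, t) ∈ S)
    fun t ht => h t (abs_pos.1 (hη.trans_le ht.1)) ht.2
  exact hev.mono fun x hx t h₁ h₂ => hx t ⟨h₁, h₂⟩

lemma mk_zero_mem_closure_connectedComponentIn {r : ℝ} (hAr : ∀ q ∈ A, |q.2| < r)
    (hA : ∀ η > 0, ∀ᶠ x in 𝓝 x₀, ∀ t, η ≤ |t| → |t| < r → (x, t) ∈ A)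
    (hx₀ : x₀ ∈ closure (Prod.fst '' connectedComponentIn A z)) :
    (x₀, 0) ∈ closure (connectedComponentIn A z) := by
  rw [mem_closure_iff_nhds_basis ((𝓝 x₀).basis_sets.prod_nhds nhds_basis_ball)]
  rintro ⟨N, ε⟩ ⟨hN : N ∈ 𝓝 x₀, hε : 0 < ε⟩
  obtain ⟨_, ⟨⟨x, t⟩, hxt, rfl⟩, hxN, hx⟩ := ((mem_closure_iff_frequently.1 hx₀).and_eventually
    ((eventually_mem_set.2 hN).and (hA (ε / 2) (half_pos hε)))).exists
  rcases lt_or_ge |t| ε with ht | ht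
  · exact ⟨(x, t), hxt, hxN, by simpa using ht⟩
  have ht₀ : 0 < |t| := hε.trans_le ht
  have hscale : ε / 2 / |t| ≤ 1 := (div_le_one ht₀).2 (by linarith)
  refine ⟨(x, ε / 2 / |t| * t), ?_, hxN, ?_⟩
  · refine mem_connectedComponentIn_of_isPreconnected hxt (K := (fun c => (x, c * t)) ''
      Icc (ε / 2 / |t|) 1) (isPreconnected_Icc.image _ (by fun_prop)) ?_
      ⟨1, right_mem_Icc.2 hscale, by simp⟩ ⟨_, left_mem_Icc.2 hscale, rfl⟩
    rintro _ ⟨c, ⟨hc, hc'⟩, rfl⟩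
    have hc₀ : 0 ≤ c := (by positivity : (0 : ℝ) ≤ ε / 2 / |t|).trans hc
    have hct : |c * t| = c * |t| := by rw [abs_mul, abs_of_nonneg hc₀]
    refine hx _ (hct ▸ (div_le_iff₀ ht₀).1 hc) ?_
    rw [hct]
    exact (mul_le_of_le_one_left ht₀.le hc').trans_lt (hAr _ (connectedComponentIn_subset _ _ hxt))
  · rw [mem_ball_zero_iff, norm_mul, norm_div, Real.norm_eq_abs t,
      Real.norm_of_nonneg (by positivity), Real.norm_of_nonneg (abs_nonneg t),
      div_mul_cancel₀ _ ht₀.ne']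
    exact half_lt_self hε

lemma exists_mem_Ioo_notMem_of_pairwise_le_abs_sub {N : Set ℝ} {c u v : ℝ}
    (hN : N.Pairwise fun s t => c ≤ |s - t|) (huv : u < v) (hc : v - u ≤ c) :
    ∃ t ∈ Ioo u v, t ∉ N := by
  by_contra! h
  obtain ⟨s, hus, hsv⟩ := exists_between huv
  obtain ⟨t, hst, htv⟩ := exists_between hsv
  have hle : c ≤ |t - s| := hN (h t ⟨hus.trans hst, htv⟩) (h s ⟨hus, hsv⟩) hst.ne'
  rw [abs_of_pos (sub_pos.2 hst)] at hle
  linarith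

lemma exists_forall_mk_mem_of_abs_le {r : ℝ} (hr : 0 < r) (hS : S ∈ 𝓝 (x₀, 0)) :
    ∃ r' > 0, r' ≤ r ∧ ∃ N ∈ 𝓝 x₀, ∀ x ∈ N, ∀ t, |t| ≤ r' → (x, t) ∈ S := by
  obtain ⟨⟨N, ε⟩, ⟨hN : N ∈ 𝓝 x₀, hε : 0 < ε⟩, hNε⟩ :=
    ((𝓝 x₀).basis_sets.prod_nhds nhds_basis_closedBall).mem_iff.1 hS
  exact ⟨min r ε, lt_min hr hε, min_le_left _ _, N, hN, fun x hx t ht =>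
    hNε ⟨hx, by simpa using (le_min_iff.1 ht).2⟩⟩

variable [LocallyConnectedSpace X]

lemma mem_fst_image_connectedComponentIn_of_mk_mem_closure (hA : IsOpen A) {t₀ τ₁ τ₂ : ℝ}
    (ht₀ : t₀ ∈ Ioo τ₁ τ₂) (h₁ : (x₀, τ₁) ∈ A) (h₂ : (x₀, τ₂) ∈ A)
    (hbad : ∀ᶠ x in 𝓝 x₀, {t ∈ Icc τ₁ τ₂ | (x, t) ∉ A}.Subsingleton)
    (hcl : (x₀, t₀) ∈ closure (connectedComponentIn A z)) :
    x₀ ∈ Prod.fst '' connectedComponentIn A z := by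
  have hmem : ∀ τ, (x₀, τ) ∈ A → ∀ᶠ x in 𝓝 x₀, (x, τ) ∈ A := fun τ hτ =>
    (Continuous.prodMk_left τ).continuousAt.eventually_mem (hA.mem_nhds hτ)
  obtain ⟨N, ⟨hNo, hx₀N, hN⟩, hNsub⟩ :=
    (LocallyConnectedSpace.open_connected_basis x₀).mem_iff.1
      ((hmem τ₁ h₁).and ((hmem τ₂ h₂).and hbad))
  obtain ⟨⟨x, t⟩, hxt, hxN, ht⟩ := (mem_closure_iff_frequently.1 hcl).and_eventually
    (prod_mem_nhds (hNo.mem_nhds hx₀N) (Ioo_mem_nhds ht₀.1 ht₀.2)) |>.exists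
  have hlift : ∀ τ, (∀ y ∈ N, (y, τ) ∈ A) → (∀ σ ∈ uIcc t τ, (x, σ) ∈ A) →
      x₀ ∈ Prod.fst '' connectedComponentIn A z := by
    intro τ hτ hσ
    have hvert : (x, τ) ∈ connectedComponentIn A z :=
      mem_connectedComponentIn_of_isPreconnected hxt
        (isPreconnected_uIcc.image (fun σ => (x, σ)) (by fun_prop)) (image_subset_iff.2 hσ)
        ⟨t, left_mem_uIcc, rfl⟩ ⟨τ, right_mem_uIcc, rfl⟩
    exact ⟨(x₀, τ), mem_connectedComponentIn_of_isPreconnected hvert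
      (hN.isPreconnected.image (fun y => (y, τ)) (by fun_prop)) (image_subset_iff.2 hτ)
      ⟨x, hxN, rfl⟩ ⟨x₀, hx₀N, rfl⟩, rfl⟩
  by_contra hnot
  obtain ⟨α, hα, hαA⟩ : ∃ α ∈ Icc τ₁ t, (x, α) ∉ A := by
    by_contra! h
    exact hnot (hlift τ₁ (fun y hy => (hNsub hy).1) fun σ hσ => h σ (uIcc_of_ge ht.1.le ▸ hσ))
  obtain ⟨β, hβ, hβA⟩ : ∃ β ∈ Icc t τ₂, (x, β) ∉ A := by
    by_contra! h
    exact hnot (hlift τ₂ (fun y hy => (hNsub hy).2.1) fun σ hσ => h σ (uIcc_of_le ht.2.le ▸ hσ))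
  have hαβ : α = β := (hNsub hxN).2.2 ⟨⟨hα.1, hα.2.trans ht.2.le⟩, hαA⟩
    ⟨⟨ht.1.le.trans hβ.1, hβ.2⟩, hβA⟩
  have hαt : α = t := le_antisymm hα.2 (hαβ ▸ hβ.1)
  exact hαA (hαt ▸ connectedComponentIn_subset _ _ hxt)

lemma mem_fst_image_connectedComponentIn_of_mem_closure (hA : IsOpen A) {B : Set X} {r c : ℝ}
    (hr : 0 < r) (hc : 0 < c) (hB : IsPreconnected B) (hAB : A ⊆ B ×ˢ Ioo (-r) r)
    (hrim : ∀ x ∈ B, ∀ t, r / 2 ≤ |t| → |t| < r → (x, t) ∈ A) (hx₀ : x₀ ∈ B)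
    (hsep : ∀ᶠ x in 𝓝 x₀, {t ∈ Ioo (-r) r | (x, t) ∉ A}.Pairwise fun s t => c ≤ |s - t|)
    (hcl : x₀ ∈ closure (Prod.fst '' connectedComponentIn A z)) :
    x₀ ∈ Prod.fst '' connectedComponentIn A z := by
  by_cases hmeet : ∃ q ∈ connectedComponentIn A z, r / 2 ≤ |q.2|
  · obtain ⟨⟨x, t⟩, hxt, ht⟩ := hmeet
    have hxtB := hAB (connectedComponentIn_subset _ _ hxt)
    exact ⟨(x₀, t), mem_connectedComponentIn_of_isPreconnected hxt
      (hB.image (fun y => (y, t)) (by fun_prop))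
      (image_subset_iff.2 fun y hy => hrim y hy t ht (abs_lt.2 hxtB.2))
      ⟨x, hxtB.1, rfl⟩ ⟨x₀, hx₀, rfl⟩, rfl⟩
  push Not at hmeet
  obtain ⟨t₀, ht₀, hclt₀⟩ := exists_mk_mem_closure_of_fst_mem_closure
    (isCompact_Icc (a := -(r / 2)) (b := r / 2)) (fun q hq => abs_le.1 (hmeet q hq).le) hcl
  obtain ⟨η, hη, hηlt⟩ := exists_between (lt_min (half_pos hc) (half_pos hr))
  obtain ⟨hηc, hηr⟩ := lt_min_iff.1 hηlt
  have hgood : ∀ u v, u < v → v - u ≤ c → -r ≤ u → v ≤ r → ∃ τ ∈ Ioo u v, (x₀, τ) ∈ A := by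
    intro u v huv huvc hu hv
    obtain ⟨τ, hτ, hτA⟩ :=
      exists_mem_Ioo_notMem_of_pairwise_le_abs_sub hsep.self_of_nhds huv huvc
    exact ⟨τ, hτ, by_contra fun h => hτA ⟨Ioo_subset_Ioo hu hv hτ, h⟩⟩
  obtain ⟨τ₁, hτ₁, hτ₁A⟩ := hgood (t₀ - η) t₀ (by linarith) (by linarith) (by linarith [ht₀.1])
    (by linarith [ht₀.2])
  obtain ⟨τ₂, hτ₂, hτ₂A⟩ := hgood t₀ (t₀ + η) (by linarith) (by linarith) (by linarith [ht₀.1])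
    (by linarith [ht₀.2])
  refine mem_fst_image_connectedComponentIn_of_mk_mem_closure hA ⟨hτ₁.2, hτ₂.1⟩ hτ₁A hτ₂A ?_ hclt₀
  have hsub : Icc τ₁ τ₂ ⊆ Ioo (-r) r :=
    Icc_subset_Ioo (by linarith [ht₀.1, hτ₁.1]) (by linarith [ht₀.2, hτ₂.2])
  filter_upwards [hsep] with x hx s hs t ht
  by_contra hst
  have hle := hx ⟨hsub hs.1, hs.2⟩ ⟨hsub ht.1, ht.2⟩ hst
  have := abs_sub_le_of_le_of_le hs.1.1 hs.1.2 ht.1.1 ht.1.2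
  linarith [hτ₁.1, hτ₂.2]

lemma connectedComponentIn_subset_fst_image (hA : IsOpen A) {B T : Set X} {r : ℝ} (hr : 0 < r)
    (hB : IsPreconnected B) (hAB : A ⊆ B ×ˢ Ioo (-r) r)
    (hrim : ∀ x ∈ B, ∀ t, r / 2 ≤ |t| → |t| < r → (x, t) ∈ A)
    (hsep : ∀ x₀ ∈ B ∩ T, ∃ c > 0, ∀ᶠ x in 𝓝 x₀,
      {t ∈ Ioo (-r) r | (x, t) ∉ A}.Pairwise fun s t => c ≤ |s - t|)
    (hx₀ : x₀ ∈ B ∩ T) (hx₀z : x₀ ∈ Prod.fst '' connectedComponentIn A z) :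
    connectedComponentIn (B ∩ T) x₀ ⊆ Prod.fst '' connectedComponentIn A z := by
  refine isPreconnected_connectedComponentIn.subset_of_closure_inter_subset
    (isOpenMap_fst _ hA.connectedComponentIn) ⟨x₀, mem_connectedComponentIn hx₀, hx₀z⟩ ?_
  rintro y ⟨hyz, hy⟩
  have hyBT := connectedComponentIn_subset _ _ hy
  obtain ⟨c, hc, hcsep⟩ := hsep y hyBT
  exact mem_fst_image_connectedComponentIn_of_mem_closure hA hr hc hB hAB hrim hyBT.1 hcsep hyz

lemma eventually_mk_zero_mem_closure_connectedComponentIn (hA : IsOpen A) {B T : Set X} {p : X}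
    {r : ℝ} (hr : 0 < r) (hBo : IsOpen B) (hB : IsPreconnected B) (hpB : p ∈ B)
    (hAB : A ⊆ B ×ˢ Ioo (-r) r) (hrim : ∀ x ∈ B, ∀ t, r / 2 ≤ |t| → |t| < r → (x, t) ∈ A)
    (htube : ∀ η > 0, ∀ᶠ x in 𝓝 p, ∀ t, η ≤ |t| → |t| < r → (x, t) ∈ A)
    (hsep : ∀ x₀ ∈ B ∩ T, ∃ c > 0, ∀ᶠ x in 𝓝 x₀,
      {t ∈ Ioo (-r) r | (x, t) ∉ A}.Pairwise fun s t => c ≤ |s - t|)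
    (hT : ∀ᶠ x in 𝓝 p, x ∈ T → p ∈ closure (connectedComponentIn (B ∩ T) x))
    (hTd : ∀ᶠ a in 𝓝 p, ∃ᶠ x in 𝓝 a, x ∈ T) :
    ∀ᶠ z in 𝓝 (p, (0 : ℝ)), z ∈ A → (p, (0 : ℝ)) ∈ closure (connectedComponentIn A z) := by
  have hfst : Tendsto Prod.fst (𝓝 (p, (0 : ℝ))) (𝓝 p) := continuous_fst.continuousAt
  filter_upwards [hfst.eventually (hBo.mem_nhds hpB), hfst.eventually hT.eventually_nhds,
    hfst.eventually hTd] with z hzB hzT hzd hzA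
  have hz : z.1 ∈ Prod.fst '' connectedComponentIn A z := ⟨z, mem_connectedComponentIn hzA, rfl⟩
  obtain ⟨x, hxT, hpx, hxB, hxz⟩ := (hzd.and_eventually (hzT.and ((hBo.eventually_mem hzB).and
    ((isOpenMap_fst _ hA.connectedComponentIn).eventually_mem hz)))).exists
  have hsub := connectedComponentIn_subset_fst_image hA hr hB hAB hrim hsep ⟨hxB, hxT⟩ hxz
  exact mk_zero_mem_closure_connectedComponentIn (fun q hq => abs_lt.2 (hAB hq).2) htube
    (closure_mono hsub (hpx hxT))

theorem ComponentsAdhere.of_fst {T : Set X} {p : X} {r : ℝ} (hT : ComponentsAdhere T p)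
    (hr : 0 < r) (hTd : ∀ᶠ a in 𝓝 p, ∃ᶠ x in 𝓝 a, x ∈ T)
    (hS : ∀ᶠ q in 𝓝 (p, (0 : ℝ)), q ∈ S → S ∈ 𝓝 q) (hpS : ∀ᶠ t in 𝓝[≠] (0 : ℝ), (p, t) ∈ S)
    (hsep : ∀ᶠ x₀ in 𝓝 p, x₀ ∈ T → ∃ c > 0, ∀ᶠ x in 𝓝 x₀,
      {t ∈ Ioo (-r) r | (x, t) ∉ S}.Pairwise fun s t => c ≤ |s - t|) :
    ComponentsAdhere S (p, (0 : ℝ)) := by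
  intro s hs
  have hpS' : ∀ᶠ q : X × ℝ in 𝓝 (p, 0), q.2 ≠ 0 → (p, q.2) ∈ S :=
    (continuous_snd.tendsto' (p, 0) 0 rfl).eventually (eventually_nhdsWithin_iff.1 hpS)
  obtain ⟨r', hr', hr'r, N, hN, hNs⟩ :=
    exists_forall_mk_mem_of_abs_le hr (inter_mem hs (hS.and hpS'))
  have htube : ∀ η > 0, ∀ᶠ x in 𝓝 p, ∀ t, η ≤ |t| → |t| ≤ r' → (x, t) ∈ S :=
    fun η hη => eventually_forall_mk_mem_of_le_abs (fun t ht htr =>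
      have hpt := hNs p (mem_of_mem_nhds hN) t htr
      hpt.2.1 (hpt.2.2 ht)) hη
  obtain ⟨B, ⟨hBo, hpB, hB⟩, hBsub⟩ := (LocallyConnectedSpace.open_connected_basis p).mem_iff.1
    (inter_mem hN ((htube (r' / 2) (half_pos hr')).and hsep))
  let A : Set (X × ℝ) := (B ×ˢ Ioo (-r') r') ∩ S
  have hAs : A ⊆ s ∩ S := fun q hq =>
    ⟨(hNs q.1 (hBsub hq.1.1).1 q.2 (abs_lt.2 hq.1.2).le).1, hq.2⟩
  have hAo : IsOpen A := isOpen_iff_mem_nhds.2 fun q hq =>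
    inter_mem ((hBo.prod isOpen_Ioo).mem_nhds hq.1)
      ((hNs q.1 (hBsub hq.1.1).1 q.2 (abs_lt.2 hq.1.2).le).2.1 hq.2)
  have hAsep : ∀ x₀ ∈ B ∩ T, ∃ c > 0, ∀ᶠ x in 𝓝 x₀,
      {t ∈ Ioo (-r') r' | (x, t) ∉ A}.Pairwise fun s t => c ≤ |s - t| := by
    rintro x₀ ⟨hx₀B, hx₀T⟩
    obtain ⟨c, hc, hcsep⟩ := (hBsub hx₀B).2.2 hx₀T
    refine ⟨c, hc, ?_⟩
    filter_upwards [hcsep, hBo.mem_nhds hx₀B] with x hx hxB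
    refine Set.Pairwise.mono ?_ hx
    exact fun t ht =>
      ⟨Ioo_subset_Ioo (neg_le_neg hr'r) hr'r ht.1, fun htS => ht.2 ⟨⟨hxB, ht.1⟩, htS⟩⟩
  have hadhere := eventually_mk_zero_mem_closure_connectedComponentIn hAo hr' hBo
    hB.isPreconnected hpB inter_subset_left
    (fun y hy t ht ht' => ⟨⟨hy, abs_lt.1 ht'⟩, (hBsub hy).2.1 t ht ht'.le⟩)
    (fun η hη => (htube η hη).mp ((hBo.eventually_mem hpB).mono fun x hxB hx t ht ht' =>
      ⟨⟨hxB, abs_lt.1 ht'⟩, hx t ht ht'.le⟩))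
    hAsep (hT B (hBo.mem_nhds hpB)) hTd
  filter_upwards [hadhere, (hBo.prod isOpen_Ioo).eventually_mem
    (x := (p, (0 : ℝ))) ⟨hpB, neg_lt_zero.2 hr', hr'⟩] with z hz hzB hzS
  exact closure_mono (connectedComponentIn_mono z hAs) (hz ⟨hzB, hzS⟩)

end ComponentsAdhere

section AnalyticComplement

variable {E : Type*} [NormedAddCommGroup E] [NormedSpace ℝ E]

lemma HasHolomorphicExtension.eventually_ne_zero_of_frequently {g : ℝ → ℂ}
    (hg : HasHolomorphicExtension g) (hne : ∃ᶠ t in 𝓝 0, g t ≠ 0) : ∀ᶠ t in 𝓝[≠] 0, g t ≠ 0 := by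
  obtain ⟨n, L, G, hG, hgG⟩ := hg
  obtain ⟨R, hR, hGR⟩ := Metric.eventually_nhds_iff_ball.1 hG
  have hanalytic : AnalyticAt ℂ (fun w : ℂ => G (0 + w • L 1)) 0 :=
    analyticOnNhd_comp_add_smul isOpen_ball (fun z hz => (hGR z hz).differentiableWithinAt) 0 (L 1)
      0 (by simpa using hR)
  have hgw : ∀ᶠ t : ℝ in 𝓝 0, g t = G (0 + (t : ℂ) • L 1) := hgG.mono fun t ht => by
    rw [ht, comp_apply, zero_add, Complex.coe_smul, ← map_smul, smul_eq_mul, mul_one]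
  have htendsto : Tendsto (fun t : ℝ => (t : ℂ)) (𝓝[≠] 0) (𝓝[≠] 0) :=
    Complex.continuous_ofReal.continuousWithinAt.tendsto_nhdsWithin fun t ht => by simpa using ht
  rcases hanalytic.eventually_eq_zero_or_eventually_ne_zero with hzero | hnezero
  · refine absurd ?_ hne
    filter_upwards [hgw, (Complex.continuous_ofReal.tendsto' 0 0 Complex.ofReal_zero).eventually
      hzero] with t ht ht₀
    rwa [not_not, ht]
  · filter_upwards [hgw.filter_mono nhdsWithin_le_nhds, htendsto.eventually hnezero] with t ht ht₀
    rwa [ht]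

lemma componentsAdhere_prod_of_forall
    (hE : ∀ Δ : E → ℂ, HasHolomorphicExtension Δ → ComponentsAdhere {x | Δ x ≠ 0} 0)
    {g : E × ℝ → ℂ} (hg : HasHolomorphicExtension g) (hne : ∃ᶠ t : ℝ in 𝓝 0, g (0, t) ≠ 0) :
    ComponentsAdhere {q | g q ≠ 0} 0 := by
  obtain ⟨Δ, r, hr, hΔ, hΔne, hsep⟩ := hg.exists_norm_le_abs_sub_of_zeros hne
  refine (hE Δ hΔ).of_fst hr (hΔ.eventually_frequently_ne_zero hΔne)
    (hg.eventually_continuousAt.mono fun q hq hgq => hq.eventually_ne hgq)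
    ((hg.comp_continuousLinearMap (.inr ℝ E ℝ)).eventually_ne_zero_of_frequently hne) ?_
  filter_upwards [hsep.eventually_nhds, hΔ.eventually_continuousAt] with x₀ hx₀ hcont hΔx₀
  have hpos : 0 < ‖Δ x₀‖ := norm_pos_iff.2 hΔx₀
  refine ⟨‖Δ x₀‖ / 2, half_pos hpos, ?_⟩
  filter_upwards [hx₀, hcont.norm.eventually (lt_mem_nhds (half_lt_self hpos))] with x hx hxΔ
  intro s hs t ht hst
  exact hxΔ.le.trans (hx ⟨hs.1, not_not.1 hs.2⟩ ⟨ht.1, not_not.1 ht.2⟩ hst)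

lemma exists_continuousLinearEquiv_prod_apply_eq {n : ℕ} {v : Fin (n + 1) → ℝ} (hv : v ≠ 0) :
    ∃ e : ((Fin n → ℝ) × ℝ) ≃L[ℝ] (Fin (n + 1) → ℝ), e (0, 1) = v := by
  let e₀ : ((Fin n → ℝ) × ℝ) ≃L[ℝ] (Fin (n + 1) → ℝ) :=
    ContinuousLinearEquiv.ofFinrankEq (by simp)
  obtain ⟨A, hA⟩ := SeparatingDual.exists_continuousLinearEquiv_apply_eq (R := ℝ)
    (x := e₀ (0, 1)) (by simp [e₀.map_eq_zero_iff]) hv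
  exact ⟨e₀.trans A, hA⟩

lemma componentsAdhere_pi (n : ℕ) (g : (Fin n → ℝ) → ℂ) (hg : HasHolomorphicExtension g) :
    ComponentsAdhere {x | g x ≠ 0} 0 := by
  induction n with
  | zero => exact componentsAdhere_of_subsingleton _ _
  | succ n ih =>
    by_cases hne : ∃ᶠ x in 𝓝 0, g x ≠ 0
    swap
    · exact fun _ _ => (not_frequently.1 hne).mono fun _ hx hgx => absurd hgx hx
    obtain ⟨v, hv, hgv⟩ := hg.exists_frequently_smul_ne_zero hne
    obtain ⟨e, he⟩ := exists_continuousLinearEquiv_prod_apply_eq hv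
    have het : ∀ t : ℝ, e (0, t) = t • v := fun t => by
      rw [← he, ← map_smul, Prod.smul_mk, smul_zero, smul_eq_mul, mul_one]
    have hadhere : ComponentsAdhere (e ⁻¹' {x | g x ≠ 0}) 0 :=
      componentsAdhere_prod_of_forall ih
        (hg.comp_continuousLinearMap (e : ((Fin n → ℝ) × ℝ) →L[ℝ] (Fin (n + 1) → ℝ)))
        (by simpa only [comp_apply, ContinuousLinearEquiv.coe_coe, het] using hgv)
    exact e.map_zero ▸ hadhere.of_preimage_homeomorph e.toHomeomorph

theorem componentsAdhere_of_analyticAt [FiniteDimensional ℝ E] {g : E → ℂ} {p : E}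
    (hg : AnalyticAt ℝ g p) : ComponentsAdhere {x | g x ≠ 0} p := by
  let e : (Fin (Module.finrank ℝ E) → ℝ) ≃L[ℝ] E := ContinuousLinearEquiv.ofFinrankEq (by simp)
  let T := e.toHomeomorph.trans (Homeomorph.addRight p)
  have hT : T 0 = p := by simp [T]
  have hgT : AnalyticAt ℝ (g ∘ T) 0 :=
    AnalyticAt.comp (hT ▸ hg) ((e.analyticAt 0).add analyticAt_const)
  have hadhere : ComponentsAdhere (T ⁻¹' {x | g x ≠ 0}) 0 :=
    componentsAdhere_pi _ _ (hasHolomorphicExtension_of_analyticAt hgT)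
  exact hT ▸ hadhere.of_preimage_homeomorph T

end AnalyticComplement

section DiscAverages

variable {E F : Type*} [NormedAddCommGroup E] [NormedSpace ℂ E] [NormedAddCommGroup F]
  [NormedSpace ℂ F]

/-- The average of `f` over the boundary of the analytic disc `φ` on `closedBall 0 r`, translated so
that its centre lies at `z`. -/
def discAverage (φ : ℂ → E) (r : ℝ) (f : E → F) (z : E) : F :=
  Real.circleAverage (fun ξ => f (φ ξ + (z - φ 0))) 0 r

lemma eventually_forall_add_sub_mem {X E : Type*} [TopologicalSpace X] [AddGroup E]
    [TopologicalSpace E] [IsTopologicalAddGroup E] {K : Set X} (hK : IsCompact K) {φ : X → E}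
    (hφ : ∀ ξ ∈ K, ContinuousAt φ ξ) {V : Set E} (hV : IsOpen V) (hφV : ∀ ξ ∈ K, φ ξ ∈ V)
    (p : E) : ∀ᶠ z in 𝓝 p, ∀ ξ ∈ K, φ ξ + (z - p) ∈ V := by
  refine hK.eventually_forall_of_forall_eventually fun ξ hξ => ?_
  have hcont : ContinuousAt (fun q : E × X => φ q.2 + (q.1 - p)) (p, ξ) :=
    (ContinuousAt.comp (f := Prod.snd) (hφ ξ hξ) continuous_snd.continuousAt).add (by fun_prop)
  exact hcont.eventually_mem (hV.mem_nhds (by simpa using hφV ξ hξ))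

lemma differentiableOn_discAverage [FiniteDimensional ℂ E] {φ : ℂ → E} {r : ℝ} (hr : 0 < r)
    (hφ : ContinuousOn φ (sphere 0 r)) {V : Set E} {f : E → F} (hf : DifferentiableOn ℂ f V)
    {s : Set E} (hs : IsOpen s) (hsV : ∀ z ∈ s, ∀ ξ ∈ sphere (0 : ℂ) r, φ ξ + (z - φ 0) ∈ V) :
    DifferentiableOn ℂ (discAverage φ r f) s := by
  have havg : discAverage φ r f = fun z => (2 * π * Complex.I : ℂ)⁻¹ •
      ∮ ξ in C(0, r), (ξ - 0)⁻¹ • f (φ ξ + (z - φ 0)) := by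
    funext z
    exact Real.circleAverage_eq_circleIntegral hr.ne'
  rw [havg]
  refine DifferentiableOn.const_smul
    (differentiableOn_circleIntegral_of_continuousOn_uncurry hr.le hs ?_ fun ξ hξ => ?_) _
  · refine ContinuousOn.smul ?_ (hf.continuousOn.comp ?_ fun q hq => hsV q.2 hq.2 q.1 hq.1)
    · refine ContinuousOn.inv₀ (by fun_prop) fun q hq => ?_
      simpa using ne_of_mem_sphere hq.1 hr.ne'
    · exact (hφ.comp continuousOn_fst fun q hq => hq.1).add (by fun_prop)
  · exact (hf.comp (by fun_prop) fun z hz => hsV z hz ξ hξ).const_smul _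

lemma exists_isOpen_differentiableOn_eqOn {V : Set E} (hV : IsOpen V) {f g : E → F} {p : E}
    (hf : DifferentiableOn ℂ f V) (hg : ∀ᶠ z in 𝓝 p, DifferentiableAt ℂ g z)
    (hgf : ∀ᶠ z in 𝓝 p, z ∈ V → g z = f z) :
    ∃ W, IsOpen W ∧ V ⊆ W ∧ p ∈ W ∧ ∃ h : E → F, DifferentiableOn ℂ h W ∧ EqOn h f V := by
  classical
  obtain ⟨N, hNsub, hN, hpN⟩ := _root_.eventually_nhds_iff.1 (hg.and hgf)
  have hVh : EqOn (V.piecewise f g) f V := V.piecewise_eqOn f g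
  have hNh : EqOn (V.piecewise f g) g N := fun z hz => by
    by_cases hzV : z ∈ V
    · rw [hVh hzV, (hNsub z hz).2 hzV]
    · exact V.piecewise_eq_of_notMem f g hzV
  refine ⟨V ∪ N, hV.union hN, subset_union_left, .inr hpN, V.piecewise f g, ?_, hVh⟩
  exact (hf.congr hVh).union_of_isOpen
    (DifferentiableOn.congr (fun z hz => (hNsub z hz).1.differentiableWithinAt) hNh) hV hN

variable [CompleteSpace F]

lemma discAverage_eq {φ : ℂ → E} {r : ℝ}
    (hφ : ∀ ξ ∈ closedBall (0 : ℂ) |r|, DifferentiableAt ℂ φ ξ) {f : E → F} {z : E}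
    (hf : ∀ ξ ∈ closedBall (0 : ℂ) |r|, DifferentiableAt ℂ f (φ ξ + (z - φ 0))) :
    discAverage φ r f z = f z := by
  have hd : DifferentiableOn ℂ (fun ξ => f (φ ξ + (z - φ 0))) (closedBall 0 |r|) := fun ξ hξ =>
    ((hf ξ hξ).comp ξ ((hφ ξ hξ).add_const _)).differentiableWithinAt
  have hmean := (hd.diffContOnCl_ball subset_rfl).circleAverage
  rwa [add_sub_cancel] at hmean

theorem exists_forall_exists_differentiableOn_ball [FiniteDimensional ℂ E] {φ : ℂ → E}
    (hφ : AnalyticAt ℂ φ 0) {V : Set E} (hV : IsOpen V) (hφV : ∀ᶠ ξ in 𝓝[≠] 0, φ ξ ∈ V) :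
    ∃ ε > 0, ∀ f g : E → F, DifferentiableOn ℂ f V →
      (∀ᶠ z in 𝓝 (φ 0), DifferentiableAt ℂ g z) → (∀ᶠ z in 𝓝 (φ 0), z ∈ V → g z = f z) →
      ∃ h : E → F, DifferentiableOn ℂ h (ball (φ 0) ε) ∧ ∀ᶠ z in 𝓝 (φ 0), z ∈ V → h z = f z := by
  obtain ⟨r, hr, hrφ⟩ := nhds_basis_closedBall.eventually_iff.1
    (hφ.eventually_analyticAt.and (eventually_nhdsWithin_iff.1 hφV))
  have hφr : ∀ ξ ∈ closedBall (0 : ℂ) r, DifferentiableAt ℂ φ ξ := fun ξ hξ =>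
    (hrφ hξ).1.differentiableAt
  have hsphere : ∀ ξ ∈ sphere (0 : ℂ) r, ContinuousAt φ ξ ∧ φ ξ ∈ V := fun ξ hξ =>
    ⟨(hφr ξ (sphere_subset_closedBall hξ)).continuousAt,
      (hrφ (sphere_subset_closedBall hξ)).2 (ne_of_mem_sphere hξ hr.ne')⟩
  obtain ⟨ε, hε, hεV⟩ := Metric.eventually_nhds_iff_ball.1 (eventually_forall_add_sub_mem
    (isCompact_sphere 0 r) (fun ξ hξ => (hsphere ξ hξ).1) hV (fun ξ hξ => (hsphere ξ hξ).2) (φ 0))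
  refine ⟨ε, hε, fun f g hf hg hgf => ⟨discAverage φ r f, differentiableOn_discAverage hr
    (fun ξ hξ => (hsphere ξ hξ).1.continuousWithinAt) hf isOpen_ball hεV, ?_⟩⟩
  obtain ⟨W, hW, hVW, hpW, h, hh, hhf⟩ := exists_isOpen_differentiableOn_eqOn hV hf hg hgf
  have hφW : ∀ ξ ∈ closedBall (0 : ℂ) r, φ ξ ∈ W := fun ξ hξ => by
    rcases eq_or_ne ξ 0 with rfl | hξ₀
    exacts [hpW, hVW ((hrφ hξ).2 hξ₀)]
  filter_upwards [ball_mem_nhds (φ 0) hε, eventually_forall_add_sub_mem (isCompact_closedBall 0 r)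
    (fun ξ hξ => (hφr ξ hξ).continuousAt) hW hφW (φ 0)] with z hzε hzW hzV
  calc discAverage φ r f z = discAverage φ r h z :=
        Real.circleAverage_congr_sphere fun ξ hξ =>
          (hhf (hεV z hzε ξ (abs_of_pos hr ▸ hξ))).symm
    _ = h z := by
        rw [← abs_of_pos hr] at hφr hzW
        exact discAverage_eq hφr fun ξ hξ => (hh _ (hzW ξ hξ)).differentiableAt
          (hW.mem_nhds (hzW ξ hξ))
    _ = f z := hhf hzV

end DiscAverages

section OneSidedExtension

variable {E F : Type*} [NormedAddCommGroup E] [NormedSpace ℂ E] [NormedAddCommGroup F]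
  [NormedSpace ℂ F] [CompleteSpace F]

lemma ComponentsAdhere.eventually_forall_eq {S N : Set E} {p : E} (hS : ComponentsAdhere S p)
    (hN : N ∈ 𝓝 p) (hNS : IsOpen (N ∩ S)) :
    ∀ᶠ z in 𝓝 p, z ∈ S → ∀ f g : E → F, DifferentiableOn ℂ f (connectedComponentIn (N ∩ S) z) →
      DifferentiableOn ℂ g (connectedComponentIn (N ∩ S) z) →
      (∀ᶠ y in 𝓝 p, y ∈ connectedComponentIn (N ∩ S) z → f y = g y) → f z = g z := by
  filter_upwards [hS N hN, hN] with z hz hzN hzS f g hf hg hfg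
  have hopen : IsOpen (connectedComponentIn (N ∩ S) z) := hNS.connectedComponentIn
  obtain ⟨y, hy, hyfg⟩ := ((mem_closure_iff_frequently.1 (hz hzS)).and_eventually
    hfg.eventually_nhds).exists
  have heq : f =ᶠ[𝓝 y] g := by
    filter_upwards [hyfg, hopen.mem_nhds hy] with w hw hwz using hw hwz
  exact eqOn_of_isPreconnected_of_eventuallyEq hopen isPreconnected_connectedComponentIn hf hg hy
    heq (mem_connectedComponentIn ⟨hzN, hzS⟩)

theorem hartogs_type_extension_from_one_side_general [FiniteDimensional ℂ E] {U : Set E}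
    (hU : IsOpen U) {ρ : E → ℝ} (hρ : AnalyticOnNhd ℝ ρ U) {φ : ℂ → E} (hφ : AnalyticAt ℂ φ 0)
    (hφU : φ 0 ∈ U) {x : E}
    (hφV : ∀ᶠ ξ in 𝓝[≠] 0, φ ξ ∈ connectedComponentIn (U \ {z | ρ z = 0}) x) :
    ∃ Ω, IsOpen Ω ∧ φ 0 ∈ Ω ∧
      ∀ f : E → F, DifferentiableOn ℂ f (connectedComponentIn (U \ {z | ρ z = 0}) x) →
        (∃ δ > 0, ∃ g : E → F, DifferentiableOn ℂ g (ball (φ 0) δ) ∧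
          ∀ z ∈ ball (φ 0) δ ∩ connectedComponentIn (U \ {z | ρ z = 0}) x, g z = f z) →
        ∃ h : E → F, DifferentiableOn ℂ h Ω ∧
          ∀ z ∈ Ω ∩ connectedComponentIn (U \ {z | ρ z = 0}) x, h z = f z := by
  set V := connectedComponentIn (U \ {z | ρ z = 0}) x with hVdef
  have hcompl : ∀ N ⊆ U, IsOpen N → IsOpen (N ∩ {z | (ρ z : ℂ) ≠ 0}) := fun N hNU hN =>
    (Complex.continuous_ofReal.comp_continuousOn (hρ.continuousOn.mono hNU)).isOpen_inter_preimage
      hN isOpen_ne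
  have hUρ : U ∩ {z | (ρ z : ℂ) ≠ 0} = U \ {z | ρ z = 0} := by
    simp only [Complex.ofReal_ne_zero, sdiff_eq, compl_ofPred, ne_eq]
  have hV : IsOpen V := (hUρ ▸ hcompl U subset_rfl hU).connectedComponentIn
  obtain ⟨ε, hε, hdisc⟩ := exists_forall_exists_differentiableOn_ball (F := F) hφ hV hφV
  have hN : IsOpen (ball (φ 0) ε ∩ U) := isOpen_ball.inter hU
  have hpN : φ 0 ∈ ball (φ 0) ε ∩ U := ⟨mem_ball_self hε, hφU⟩
  have hadhere : ComponentsAdhere {z | (ρ z : ℂ) ≠ 0} (φ 0) :=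
    componentsAdhere_of_analyticAt ((Complex.ofRealCLM.analyticAt _).comp (hρ _ hφU))
  obtain ⟨Ω, hΩ, hΩo, hpΩ⟩ := _root_.eventually_nhds_iff.1
    ((hadhere.eventually_forall_eq (F := F) (hN.mem_nhds hpN) (hcompl _ inter_subset_right hN)).and
      (hN.eventually_mem hpN))
  refine ⟨Ω, hΩo, hpΩ, fun f hf ⟨δ, hδ, g, hg, hgf⟩ => ?_⟩
  obtain ⟨h, hh, hhf⟩ := hdisc f g hf (hg.eventually_differentiableAt (ball_mem_nhds _ hδ))
    (eventually_of_mem (ball_mem_nhds _ hδ) fun z hz hzV => hgf z ⟨hz, hzV⟩)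
  refine ⟨h, hh.mono fun z hz => (hΩ z hz).2.1, fun z ⟨hzΩ, hzV⟩ => ?_⟩
  have hWN : connectedComponentIn (ball (φ 0) ε ∩ U ∩ {z | (ρ z : ℂ) ≠ 0}) z ⊆ ball (φ 0) ε :=
    fun y hy => (connectedComponentIn_subset _ _ hy).1.1
  have hWV : connectedComponentIn (ball (φ 0) ε ∩ U ∩ {z | (ρ z : ℂ) ≠ 0}) z ⊆ V := by
    rw [hVdef, connectedComponentIn_eq hzV, ← hUρ]
    exact connectedComponentIn_mono z (inter_subset_inter_left _ inter_subset_right)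
  have hρz : (ρ z : ℂ) ≠ 0 := (hUρ ▸ connectedComponentIn_subset _ _ hzV).2
  exact (hΩ z hzΩ).1 hρz h f (hh.mono hWN) (hf.mono hWV) (hhf.mono fun y hy hyW => hy (hWV hyW))

lemma IsSupportCurve.exists_analyticAt {n : ℕ} {U H C : Set (EuclideanSpace ℂ (Fin n))}
    {p : EuclideanSpace ℂ (Fin n)} (hC : IsSupportCurve U H p C) :
    ∃ φ : ℂ → EuclideanSpace ℂ (Fin n), AnalyticAt ℂ φ 0 ∧ φ 0 = p ∧
      ∀ᶠ ξ in 𝓝[≠] 0, φ ξ ∈ C \ {p} := by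
  obtain ⟨φ, hφ, -, ⟨a, ha, b, hb, hab⟩, rfl, rfl, -⟩ := hC
  have h₀ : (0 : ℂ) ∈ ball (0 : ℂ) 1 := mem_ball_self one_pos
  have hφ₀ : AnalyticAt ℂ φ 0 := hφ.analyticAt (isOpen_ball.mem_nhds h₀)
  refine ⟨φ, hφ₀, rfl, ?_⟩
  have hne : ∀ᶠ ξ in 𝓝[≠] 0, φ ξ ≠ φ 0 := by
    refine (hφ₀.eventually_eq_or_eventually_ne analyticAt_const).resolve_left fun hconst => hab ?_
    have heq : EqOn φ (fun _ => φ 0) (ball 0 1) :=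
      eqOn_of_isPreconnected_of_eventuallyEq isOpen_ball (convex_ball 0 1).isPreconnected hφ
        (differentiableOn_const _) h₀ hconst
    exact (heq ha).trans (heq hb).symm
  filter_upwards [hne, mem_nhdsWithin_of_mem_nhds (isOpen_ball.mem_nhds h₀)] with ξ hξ hξ₁
  exact ⟨mem_image_of_mem φ hξ₁, hξ⟩

end OneSidedExtension

theorem hartogs_type_extension_from_one_side {n : ℕ} (hn : 2 ≤ n)
    (U H : Set (EuclideanSpace ℂ (Fin n)))
    (hH : IsRealAnalyticHypersurface U H)
    (p : EuclideanSpace ℂ (Fin n)) (hp : p ∈ H)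
    (C₁ C₂ V V₂ : Set (EuclideanSpace ℂ (Fin n)))
    (hC₁ : IsSupportCurve U H p C₁) (hC₂ : IsSupportCurve U H p C₂)
    (hV : IsComponentOfComplement U H V) (hV₂ : IsComponentOfComplement U H V₂)
    (hne : V ≠ V₂) (hC₁V : C₁ \ {p} ⊆ V) (hC₂V : C₂ \ {p} ⊆ V₂) :
    ∃ Ω : Set (EuclideanSpace ℂ (Fin n)), IsOpen Ω ∧ p ∈ Ω ∧
      ∀ f : EuclideanSpace ℂ (Fin n) → ℂ, DifferentiableOn ℂ f V →
        (∃ δ > 0, ∃ g : EuclideanSpace ℂ (Fin n) → ℂ,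
          DifferentiableOn ℂ g (ball p δ) ∧ ∀ z ∈ ball p δ ∩ V, g z = f z) →
        ∃ F : EuclideanSpace ℂ (Fin n) → ℂ, DifferentiableOn ℂ F Ω ∧
          ∀ z ∈ Ω ∩ V, F z = f z := by
  obtain ⟨hU, -, ρ, hρ, rfl, -⟩ := hH
  obtain ⟨φ, hφ, rfl, hφC⟩ := hC₁.exists_analyticAt
  obtain ⟨x, -, rfl⟩ := hV
  have hdiff : U \ {z | z ∈ U ∧ ρ z = 0} = U \ {z | ρ z = 0} := sdiff_self_inter
  rw [hdiff] at hC₁V ⊢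
  exact hartogs_type_extension_from_one_side_general hU hρ hφ hp.1
    (hφC.mono fun _ hξ => hC₁V hξ)
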